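/- Fix a positive integer k. For positive real x, let C(x) denote the number of cyclic numbers ≤ x. Then the sum of the k-th powers of all cyclic numbers ≤ x is asymptotically equivalent to C(x)·x^k/(k+1) as x → ∞. -/

import Mathlib

open Filter Asymptotics Real

/-- A positive integer `n` is *cyclic* if `gcd(n, φ(n)) = 1`. -/
def IsCyclicNum (n : ℕ) : Prop := 0 < n ∧ Nat.gcd n (Nat.totient n) = 1

instance : DecidablePred IsCyclicNum := fun n =>
  decidable_of_iff (0 < n ∧ Nat.gcd n (Nat.totient n) = 1) Iff.rfl

/-- The `n`-th cyclic number, indexed from 1: `cyclicNum 1 = 1`, `cyclicNum 2 = 2`, .... -/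
noncomputable def cyclicNum (n : ℕ) : ℕ := Nat.nth IsCyclicNum (n - 1)

/-- The number of cyclic numbers less than or equal to the real number `x`. -/
noncomputable def cyclicCount (x : ℝ) : ℕ :=
  ((Finset.range (⌊x⌋₊ + 1)).filter IsCyclicNum).card

/-- The sum of the `k`-th powers of all cyclic numbers `≤ x`. -/
noncomputable def cyclicPowSum (k : ℕ) (x : ℝ) : ℝ :=
  ∑ n ∈ (Finset.range (⌊x⌋₊ + 1)).filter IsCyclicNum, (n : ℝ) ^ k

/-!
Let `f` be the indicator of the cyclic numbers, `L x = ∑ n ≤ x, f n / n` and `C x = ∑ n ≤ x, f n`.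
Divisors of cyclic numbers are cyclic, so the defect `f * Λ - f · log` is nonnegative. It counts
the ways to leave the cyclic numbers on multiplying by a prime power; multiplying a cyclic `m` by a
new prime `p` does so only if some prime `r ∣ m` has `p ≡ 1 mod r` or `r ≡ 1 mod p`. If the
summatory function of the defect is `o(x L x)`, then Selberg's symmetry formula, convolved with
`f`, shows that `C x * log² x` is asymptotic to `x` times a slowly varying function. Hence
`C (u x) / C x → u`, and partial summation gives the power moments.

To bound the defect, large `r` contribute little by a Chebyshev-type bound for the primes
`≡ 1 mod r`. For a fixed `r`, a cyclic multiple of `r` has no prime factor `≡ 1 mod r`, so its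
products with the integers composed of such primes are all distinct; as these primes are plentiful
by Dirichlet's theorem, the cyclic multiples of `r` contribute only `O(log ^ (1 - κ) x)` to `L x`
for some `κ > 0`. On the other hand, the indicator of the cyclic numbers without small prime
factors has arbitrarily small relative defect, which forces `L x` to exceed every power
`log ^ α x` with `α < 1`.
-/

open Finset Topology
open ArithmeticFunction (vonMangoldt_nonneg vonMangoldt_sum)
open scoped ArithmeticFunction.vonMangoldt ArithmeticFunction.Moebius Chebyshev

/-! ### Elementary estimates -/

/-- The summatory function `∑ 1 ≤ n ≤ x, a n` of a real sequence `a`; the value `a 0` is ignored. -/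
noncomputable def summatory (a : ℕ → ℝ) (x : ℝ) : ℝ := ∑ n ∈ Ioc 0 ⌊x⌋₊, a n

lemma log_sub_log_le {a b : ℝ} (ha : 0 < a) (hb : 0 < b) : log b - log a ≤ (b - a) / a := by
  rw [← log_div hb.ne' ha.ne', sub_div, div_self ha.ne']
  exact log_le_sub_one_of_pos (by positivity)

lemma one_le_div_of_mem_Ioc_floor {x : ℝ} {n : ℕ} (hn : n ∈ Ioc 0 ⌊x⌋₊) : 1 ≤ x / n := by
  obtain ⟨hn0, hnx⟩ := Finset.mem_Ioc.mp hn
  rw [one_le_div (by exact_mod_cast hn0)]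
  exact (Nat.le_floor_iff' hn0.ne').mp hnx

lemma log_div_nonneg_of_mem_Ioc_floor {x : ℝ} {n : ℕ} (hn : n ∈ Ioc 0 ⌊x⌋₊) : 0 ≤ log (x / n) :=
  log_nonneg (one_le_div_of_mem_Ioc_floor hn)

lemma log_div_of_mem_Ioc_floor {x : ℝ} {n : ℕ} (hn : n ∈ Ioc 0 ⌊x⌋₊) :
    log (x / n) = log x - log n := by
  have hx := one_le_div_of_mem_Ioc_floor hn
  refine log_div ?_ ?_ <;> rintro h <;> norm_num [h] at hx

lemma sum_divisorsAntidiagonal_eq_sum_floor_div (F : ℕ → ℕ → ℝ) (x : ℝ) :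
    ∑ n ∈ Ioc 0 ⌊x⌋₊, ∑ d ∈ n.divisorsAntidiagonal, F d.1 d.2 =
      ∑ m ∈ Ioc 0 ⌊x⌋₊, ∑ k ∈ Ioc 0 ⌊x / m⌋₊, F m k := by
  rw [Finset.sum_sigma', Finset.sum_sigma']
  refine Finset.sum_bij' (fun a _ ↦ ⟨a.2.1, a.2.2⟩) (fun b _ ↦ ⟨b.1 * b.2, (b.1, b.2)⟩)
    ?_ ?_ ?_ (fun _ _ ↦ rfl) (fun _ _ ↦ rfl)
  · rintro ⟨n, a, b⟩ h
    simp only [mem_sigma, mem_Ioc, Nat.mem_divisorsAntidiagonal, Nat.floor_div_natCast] at h ⊢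
    obtain ⟨⟨hn, hnx⟩, rfl, -⟩ := h
    have ha : 0 < a := Nat.pos_of_mul_pos_right hn
    have hb : 0 < b := Nat.pos_of_mul_pos_left hn
    exact ⟨⟨ha, by nlinarith⟩, hb, by rw [Nat.le_div_iff_mul_le ha]; linarith⟩
  · rintro ⟨a, b⟩ h
    simp only [mem_sigma, mem_Ioc, Nat.mem_divisorsAntidiagonal, Nat.floor_div_natCast] at h ⊢
    obtain ⟨⟨ha, -⟩, hb, hbx⟩ := h
    rw [Nat.le_div_iff_mul_le ha] at hbx
    exact ⟨⟨by positivity, by linarith⟩, trivial, by positivity⟩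
  · rintro ⟨n, a, b⟩ h
    simp only [mem_sigma, Nat.mem_divisorsAntidiagonal] at h
    obtain ⟨-, rfl, -⟩ := h
    rfl

lemma sum_mul_le_of_sum_le_linear {a f : ℕ → ℝ} {K L : ℝ} {N : ℕ} (hN : 1 ≤ N)
    (ha : ∀ n ≤ N, ∑ i ∈ Ioc 0 n, a i ≤ K * n + L) (hfN : 0 ≤ f N)
    (hf : AntitoneOn f (Set.Icc 1 N)) :
    ∑ i ∈ Ioc 0 N, a i * f i ≤ K * ∑ i ∈ Ioc 0 N, f i + L * f 1 := by
  have by_parts : ∀ n, 1 ≤ n → n ≤ N → ∑ i ∈ Ioc 0 n, a i * f i ≤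
      K * ∑ i ∈ Ioc 0 n, f i + L * f 1 + (∑ i ∈ Ioc 0 n, a i - K * n - L) * f n := by
    intro n hn
    induction n, hn using Nat.le_induction with
    | base => intro _; simp; linarith
    | succ n hn ih =>
      intro h
      have hf_succ := hf ⟨hn, by omega⟩ ⟨by omega, h⟩ n.le_succ
      simp only [Finset.sum_Ioc_succ_top n.zero_le, Nat.cast_succ]
      nlinarith [ih (by omega), ha n (by omega)]
  nlinarith [by_parts N hN le_rfl, ha N le_rfl]

lemma sum_log_Ioc_bounds {N : ℕ} (hN : 1 ≤ N) :
    N * log N - N ≤ ∑ n ∈ Ioc 0 N, log (n : ℝ) ∧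
      ∑ n ∈ Ioc 0 N, log (n : ℝ) ≤ N * log N - N + log N + 1 := by
  induction N, hN using Nat.le_induction with
  | base => simp
  | succ n hn ih =>
    have hn0 : (0 : ℝ) < n := by exact_mod_cast hn
    rw [Finset.sum_Ioc_succ_top n.zero_le]
    push_cast
    have upper := log_sub_log_le hn0 (b := n + 1) (by positivity)
    have lower := log_sub_log_le (a := n + 1) (by positivity) hn0
    rw [le_div_iff₀ (by positivity)] at upper lower
    constructor <;> linarith [ih.1, ih.2]

lemma abs_sum_log_sub_le {x : ℝ} (hx : 1 ≤ x) :
    |∑ n ∈ Ioc 0 ⌊x⌋₊, log (n : ℝ) - (x * log x - x)| ≤ 2 * log x + 2 := by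
  have hN : 1 ≤ ⌊x⌋₊ := (Nat.one_le_floor_iff x).mpr hx
  obtain ⟨lower, upper⟩ := sum_log_Ioc_bounds hN
  set N := ⌊x⌋₊
  have hN1 : (1 : ℝ) ≤ N := by exact_mod_cast hN
  have hNx : N ≤ x := Nat.floor_le (by linarith)
  have hxN : x < N + 1 := Nat.lt_floor_add_one x
  have hlog : log N ≤ log x := log_le_log (by linarith) hNx
  have hlogx : 0 ≤ log x := log_nonneg hx
  have hdiff := log_sub_log_le (a := N) (b := x) (by linarith) (by linarith)
  rw [le_div_iff₀ (by linarith)] at hdiff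
  rw [abs_le]
  constructor <;> nlinarith

lemma abs_sum_one_div_sub_le {x : ℝ} (hx : 1 ≤ x) :
    |∑ n ∈ Ioc 0 ⌊x⌋₊, (1 : ℝ) / n - (log x + eulerMascheroniConstant)| ≤ 2 / x := by
  have hN : 1 ≤ ⌊x⌋₊ := (Nat.one_le_floor_iff x).mpr hx
  set N := ⌊x⌋₊
  have hN1 : (1 : ℝ) ≤ N := by exact_mod_cast hN
  have hNx : N ≤ x := Nat.floor_le (by linarith)
  have hxN : x < N + 1 := Nat.lt_floor_add_one x
  have hharm : ∑ n ∈ Ioc 0 N, (1 : ℝ) / n = harmonic N := by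
    simp [harmonic_eq_sum_Icc, ← Finset.Icc_add_one_left_eq_Ioc]
  have lower := eulerMascheroniSeq_lt_eulerMascheroniConstant N
  have upper := eulerMascheroniConstant_lt_eulerMascheroniSeq' N
  rw [eulerMascheroniSeq] at lower
  rw [eulerMascheroniSeq', if_neg (by omega)] at upper
  have hlogN : log x - log N ≤ 2 / x := by
    refine (log_sub_log_le (by linarith) (by linarith)).trans ?_
    rw [div_le_div_iff₀ (by linarith) (by linarith)]
    nlinarith
  have hlogN1 : log (N + 1) - log x ≤ 2 / x := by
    refine (log_sub_log_le (by linarith) (by linarith)).trans ?_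
    gcongr
    linarith
  rw [hharm, abs_le]
  constructor <;> linarith

lemma sum_sqrt_div_le {x : ℝ} (hx : 0 ≤ x) : ∑ d ∈ Ioc 0 ⌊x⌋₊, √(x / d) ≤ 2 * x := by
  have sum_inv_sqrt (N : ℕ) : ∑ d ∈ Ioc 0 N, 1 / √(d : ℝ) ≤ 2 * √(N : ℝ) := by
    induction N with
    | zero => simp
    | succ n ih =>
      rw [Finset.sum_Ioc_succ_top n.zero_le]
      push_cast
      have hpos : 0 < √((n : ℝ) + 1) := sqrt_pos.mpr (by positivity)
      have hterm : 1 / √((n : ℝ) + 1) ≤ 2 * (√((n : ℝ) + 1) - √(n : ℝ)) := by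
        rw [div_le_iff₀ hpos]
        nlinarith [sq_nonneg (√((n : ℝ) + 1) - √(n : ℝ)),
          sq_sqrt (show (0 : ℝ) ≤ n + 1 by positivity), sq_sqrt (show (0 : ℝ) ≤ n by positivity)]
      linarith
  calc ∑ d ∈ Ioc 0 ⌊x⌋₊, √(x / d) = √x * ∑ d ∈ Ioc 0 ⌊x⌋₊, 1 / √(d : ℝ) := by
        simp only [sqrt_div hx, Finset.mul_sum, mul_one_div]
    _ ≤ √x * (2 * √x) := by
        gcongr
        exact (sum_inv_sqrt _).trans (by gcongr; exact Nat.floor_le hx)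
    _ = 2 * x := by linarith [mul_self_sqrt hx]

/-! ### Selberg's symmetry formula -/

lemma psi_le_six_mul {x : ℝ} (hx : 0 ≤ x) : ψ x ≤ 6 * x := by
  have hlog4 : log 4 ≤ 2 := by
    rw [show (4 : ℝ) = 2 ^ 2 by norm_num, log_pow]
    norm_num
    linarith [log_two_lt_d9]
  nlinarith [Chebyshev.psi_le_const_mul_self hx]

lemma sum_divisorsAntidiagonal_vonMangoldt_snd (n : ℕ) :
    ∑ d ∈ n.divisorsAntidiagonal, Λ d.2 = log n := by
  rw [Nat.sum_divisorsAntidiagonal' (f := fun _ y ↦ Λ y), vonMangoldt_sum]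

lemma sum_divisorsAntidiagonal_vonMangoldt_fst (n : ℕ) :
    ∑ d ∈ n.divisorsAntidiagonal, Λ d.1 = log n := by
  rw [Nat.sum_divisorsAntidiagonal (f := fun y _ ↦ Λ y), vonMangoldt_sum]

lemma sum_psi_div (x : ℝ) : ∑ m ∈ Ioc 0 ⌊x⌋₊, ψ (x / m) = ∑ n ∈ Ioc 0 ⌊x⌋₊, log (n : ℝ) := by
  simpa only [sum_divisorsAntidiagonal_vonMangoldt_snd, Chebyshev.psi] using
    (sum_divisorsAntidiagonal_eq_sum_floor_div (fun _ k ↦ Λ k) x).symm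

lemma sum_floor_div_mul_vonMangoldt (x : ℝ) :
    ∑ m ∈ Ioc 0 ⌊x⌋₊, (⌊x / m⌋₊ : ℝ) * Λ m = ∑ n ∈ Ioc 0 ⌊x⌋₊, log (n : ℝ) := by
  simpa only [sum_divisorsAntidiagonal_vonMangoldt_fst, Finset.sum_const, Nat.card_Ioc,
    nsmul_eq_mul, Nat.sub_zero] using
    (sum_divisorsAntidiagonal_eq_sum_floor_div (fun m _ ↦ Λ m) x).symm

theorem mertens_vonMangoldt {x : ℝ} (hx : 1 ≤ x) :
    |∑ n ∈ Ioc 0 ⌊x⌋₊, Λ n / n - log x| ≤ 11 := by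
  have hx0 : 0 < x := by linarith
  have upper : ∑ m ∈ Ioc 0 ⌊x⌋₊, (⌊x / m⌋₊ : ℝ) * Λ m ≤ x * ∑ n ∈ Ioc 0 ⌊x⌋₊, Λ n / n := by
    rw [Finset.mul_sum]
    refine Finset.sum_le_sum fun m _ ↦ ?_
    calc (⌊x / m⌋₊ : ℝ) * Λ m ≤ x / m * Λ m :=
          mul_le_mul_of_nonneg_right (Nat.floor_le (by positivity)) vonMangoldt_nonneg
      _ = x * (Λ m / m) := by ring
  have lower : x * ∑ n ∈ Ioc 0 ⌊x⌋₊, Λ n / n - ψ x ≤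
      ∑ m ∈ Ioc 0 ⌊x⌋₊, (⌊x / m⌋₊ : ℝ) * Λ m := by
    rw [Finset.mul_sum, Chebyshev.psi, ← Finset.sum_sub_distrib]
    refine Finset.sum_le_sum fun m _ ↦ ?_
    calc x * (Λ m / m) - Λ m = (x / m - 1) * Λ m := by ring
      _ ≤ ⌊x / m⌋₊ * Λ m :=
          mul_le_mul_of_nonneg_right (Nat.sub_one_lt_floor _).le vonMangoldt_nonneg
  rw [sum_floor_div_mul_vonMangoldt] at upper lower
  obtain ⟨hlog_lower, hlog_upper⟩ := abs_le.mp (abs_sum_log_sub_le hx)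
  have hpsi := psi_le_six_mul hx0.le
  have hlogx := log_le_sub_one_of_pos hx0
  rw [abs_le]
  constructor <;> refine le_of_mul_le_mul_left ?_ hx0 <;> linarith

/-- The error term in the prime number theorem, shifted by `γ + 1`: with this shift
`∑ n ≤ x, psiError (x / n)` is only of logarithmic size. -/
noncomputable def psiError (x : ℝ) : ℝ := ψ x - x + (eulerMascheroniConstant + 1)

lemma abs_sum_psiError_div_le {x : ℝ} (hx : 1 ≤ x) :
    |∑ n ∈ Ioc 0 ⌊x⌋₊, psiError (x / n)| ≤ 2 * log x + 6 := by
  have hx0 : 0 < x := by linarith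
  have hsum : ∑ n ∈ Ioc 0 ⌊x⌋₊, psiError (x / n) = ∑ n ∈ Ioc 0 ⌊x⌋₊, log (n : ℝ)
      - x * ∑ n ∈ Ioc 0 ⌊x⌋₊, (1 : ℝ) / n + (eulerMascheroniConstant + 1) * ⌊x⌋₊ := by
    simp only [psiError, Finset.sum_add_distrib, Finset.sum_sub_distrib, Finset.sum_const,
      Nat.card_Ioc, nsmul_eq_mul, Nat.sub_zero, sum_psi_div, Finset.mul_sum, mul_one_div]
    ring
  have hharm : |x * (∑ n ∈ Ioc 0 ⌊x⌋₊, (1 : ℝ) / n - (log x + eulerMascheroniConstant))| ≤ 2 := by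
    rw [abs_mul, abs_of_pos hx0, ← le_div_iff₀' hx0]
    exact abs_sum_one_div_sub_le hx
  have hlog := abs_sum_log_sub_le hx
  have hfloor : (⌊x⌋₊ : ℝ) ≤ x := Nat.floor_le hx0.le
  have hfloor' : x < ⌊x⌋₊ + 1 := Nat.lt_floor_add_one x
  have := one_half_lt_eulerMascheroniConstant
  have := eulerMascheroniConstant_lt_two_thirds
  rw [abs_le] at hlog hharm
  rw [hsum, abs_le]
  constructor <;> nlinarith

lemma sum_divisors_moebius_mul_log_div {x : ℝ} (hx : 0 < x) (n : ℕ) :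
    ∑ d ∈ n.divisors, (μ d : ℝ) * log (x / d) = (if n = 1 then log x else 0) + Λ n := by
  have hsplit : ∑ d ∈ n.divisors, (μ d : ℝ) * log (x / d) =
      log x * ∑ d ∈ n.divisors, (μ d : ℝ)
        - ∑ d ∈ n.divisors, (μ d : ℝ) * ArithmeticFunction.log d := by
    rw [Finset.mul_sum, ← Finset.sum_sub_distrib]
    refine Finset.sum_congr rfl fun d hd ↦ ?_
    have hd0 : (d : ℝ) ≠ 0 := by exact_mod_cast (Nat.pos_of_mem_divisors hd).ne'
    rw [log_div hx.ne' hd0, ArithmeticFunction.log_apply]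
    ring
  have hmoebius : ∑ d ∈ n.divisors, (μ d : ℝ) = if n = 1 then 1 else 0 := by
    rw [← ArithmeticFunction.one_apply, ← ArithmeticFunction.coe_moebius_mul_coe_zeta,
      ArithmeticFunction.coe_mul_zeta_apply]
    simp
  rw [hsplit, ArithmeticFunction.sum_moebius_mul_log_eq, hmoebius]
  split_ifs <;> ring

theorem tatuzawa_iseki (F : ℝ → ℝ) {x : ℝ} (hx : 1 ≤ x) :
    ∑ d ∈ Ioc 0 ⌊x⌋₊, μ d * log (x / d) * ∑ n ∈ Ioc 0 ⌊x / d⌋₊, F (x / d / n) =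
      F x * log x + ∑ n ∈ Ioc 0 ⌊x⌋₊, F (x / n) * Λ n := by
  have inner_sum (n : ℕ) :
      ∑ d ∈ n.divisorsAntidiagonal, μ d.1 * log (x / d.1) * F (x / d.1 / d.2) =
        (if n = 1 then F x * log x else 0) + F (x / n) * Λ n := by
    calc _ = ∑ d ∈ n.divisorsAntidiagonal, μ d.1 * log (x / d.1) * F (x / n) := by
          refine Finset.sum_congr rfl fun d hd ↦ ?_
          rw [div_div, ← (Nat.mem_divisorsAntidiagonal.mp hd).1, Nat.cast_mul]
      _ = (∑ d ∈ n.divisors, μ d * log (x / d)) * F (x / n) := by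
          rw [← Finset.sum_mul,
            Nat.sum_divisorsAntidiagonal (f := fun d _ ↦ (μ d : ℝ) * log (x / d))]
      _ = _ := by
          rw [sum_divisors_moebius_mul_log_div (by linarith)]
          split_ifs with hn
          · simp [hn, mul_comm]
          · ring
  have hmem : 1 ∈ Ioc 0 ⌊x⌋₊ := by simpa using hx
  simp only [Finset.mul_sum]
  rw [← sum_divisorsAntidiagonal_eq_sum_floor_div
    (fun d n ↦ μ d * log (x / d) * F (x / d / n)), Finset.sum_congr rfl fun n _ ↦ inner_sum n,
    Finset.sum_add_distrib, Finset.sum_ite_eq', if_pos hmem]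

lemma log_mul_log_add_le_sqrt {t : ℝ} (ht : 1 ≤ t) : log t * (2 * log t + 6) ≤ 56 * √t := by
  have hpos : 0 < √√t := by positivity
  have hone : 1 ≤ √√t := by rwa [one_le_sqrt, one_le_sqrt]
  have hlog0 : 0 ≤ log t := log_nonneg ht
  have hlog : log t ≤ 4 * √√t := by
    have := log_le_sub_one_of_pos hpos
    rw [log_sqrt (by positivity), log_sqrt (by positivity)] at this
    linarith
  calc log t * (2 * log t + 6) ≤ 4 * √√t * (2 * (4 * √√t) + 6) := by gcongr
    _ ≤ 56 * √√t ^ 2 := by nlinarith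
    _ = 56 * √t := by rw [sq_sqrt (by positivity)]

lemma abs_psiError_mul_log_add_sum_le {x : ℝ} (hx : 1 ≤ x) :
    |psiError x * log x + ∑ n ∈ Ioc 0 ⌊x⌋₊, psiError (x / n) * Λ n| ≤ 112 * x := by
  rw [← tatuzawa_iseki psiError hx]
  calc _ ≤ ∑ d ∈ Ioc 0 ⌊x⌋₊,
        |μ d * log (x / d) * ∑ n ∈ Ioc 0 ⌊x / d⌋₊, psiError (x / d / n)| :=
        Finset.abs_sum_le_sum_abs _ _
    _ ≤ ∑ d ∈ Ioc 0 ⌊x⌋₊, 56 * √(x / d) := by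
        refine Finset.sum_le_sum fun d hd ↦ ?_
        have ht := one_le_div_of_mem_Ioc_floor hd
        have hlog := log_nonneg ht
        have hmu : |(μ d : ℝ)| ≤ 1 := by exact_mod_cast ArithmeticFunction.abs_moebius_le_one
        rw [abs_mul, abs_mul, abs_of_nonneg hlog]
        calc _ ≤ 1 * log (x / d) * (2 * log (x / d) + 6) := by
              gcongr
              exact abs_sum_psiError_div_le ht
          _ ≤ 56 * √(x / d) := by
              rw [one_mul]
              exact log_mul_log_add_le_sqrt ht
    _ ≤ 56 * (2 * x) := by
        rw [← Finset.mul_sum]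
        gcongr
        exact sum_sqrt_div_le (by linarith)
    _ = 112 * x := by ring

lemma sum_log_div_le {x : ℝ} (hx : 1 ≤ x) : ∑ n ∈ Ioc 0 ⌊x⌋₊, log (x / n) ≤ 5 * x := by
  have hsum : ∑ n ∈ Ioc 0 ⌊x⌋₊, log (x / n) = ⌊x⌋₊ * log x - ∑ n ∈ Ioc 0 ⌊x⌋₊, log (n : ℝ) := by
    rw [Finset.sum_congr rfl fun n hn ↦ log_div_of_mem_Ioc_floor hn, Finset.sum_sub_distrib]
    simp
  have hfloor : (⌊x⌋₊ : ℝ) ≤ x := Nat.floor_le (by linarith)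
  have hlog := log_le_sub_one_of_pos (show 0 < x by linarith)
  have hlog0 := log_nonneg hx
  rw [hsum]
  nlinarith [(abs_le.mp (abs_sum_log_sub_le hx)).1]

lemma sum_vonMangoldt_mul_log_div_le {x : ℝ} (hx : 1 ≤ x) :
    ∑ n ∈ Ioc 0 ⌊x⌋₊, Λ n * log (x / n) ≤ 30 * x := by
  have hfloor : 1 ≤ ⌊x⌋₊ := (Nat.one_le_floor_iff x).mpr hx
  have habel : ∑ n ∈ Ioc 0 ⌊x⌋₊, Λ n * log (x / n) ≤
      6 * ∑ n ∈ Ioc 0 ⌊x⌋₊, log (x / n) + 0 * log (x / (1 : ℕ)) := by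
    refine sum_mul_le_of_sum_le_linear (f := fun n : ℕ ↦ log (x / n)) hfloor (fun n _ ↦ ?_) ?_ ?_
    · simpa [Chebyshev.psi] using psi_le_six_mul n.cast_nonneg
    · exact log_div_nonneg_of_mem_Ioc_floor (Finset.mem_Ioc.mpr ⟨hfloor, le_rfl⟩)
    · intro m hm n hn hmn
      have hm0 : (0 : ℝ) < m := by exact_mod_cast hm.1
      have hn0 : (0 : ℝ) < n := by exact_mod_cast hn.1
      dsimp only
      gcongr
  linarith [sum_log_div_le hx]

/-- The summand of Selberg's formula: `Λ₂ = Λ log + Λ * Λ`. -/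
noncomputable def selbergLambda : ArithmeticFunction ℝ :=
  ArithmeticFunction.pmul Λ ArithmeticFunction.log + Λ * Λ

lemma sum_selbergLambda (x : ℝ) :
    summatory selbergLambda x =
      ψ x * log x - ∑ n ∈ Ioc 0 ⌊x⌋₊, Λ n * log (x / n)
        + ∑ k ∈ Ioc 0 ⌊x⌋₊, ψ (x / k) * Λ k := by
  simp only [summatory, selbergLambda, ArithmeticFunction.add_apply,
    ArithmeticFunction.pmul_apply, ArithmeticFunction.mul_apply, ArithmeticFunction.log_apply]
  rw [Finset.sum_add_distrib, sum_divisorsAntidiagonal_eq_sum_floor_div (fun a b ↦ Λ a * Λ b)]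
  congr 1
  · rw [Chebyshev.psi, Finset.sum_mul, ← Finset.sum_sub_distrib]
    refine Finset.sum_congr rfl fun n hn ↦ ?_
    rw [log_div_of_mem_Ioc_floor hn]
    ring
  · refine Finset.sum_congr rfl fun n _ ↦ ?_
    rw [← Finset.mul_sum, mul_comm, Chebyshev.psi]

theorem selberg_symmetry_formula {x : ℝ} (hx : 1 ≤ x) :
    |summatory selbergLambda x - 2 * x * log x| ≤ 200 * x := by
  have hx0 : 0 < x := by linarith
  have hlog0 := log_nonneg hx
  have hlog := log_le_sub_one_of_pos hx0
  have hΛlog := sum_vonMangoldt_mul_log_div_le hx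
  have hΛlog0 : 0 ≤ ∑ n ∈ Ioc 0 ⌊x⌋₊, Λ n * log (x / n) := Finset.sum_nonneg fun n hn ↦
    mul_nonneg vonMangoldt_nonneg (log_div_nonneg_of_mem_Ioc_floor hn)
  have hsum_error : ∑ k ∈ Ioc 0 ⌊x⌋₊, psiError (x / k) * Λ k =
      ∑ k ∈ Ioc 0 ⌊x⌋₊, ψ (x / k) * Λ k - x * ∑ n ∈ Ioc 0 ⌊x⌋₊, Λ n / n
        + (eulerMascheroniConstant + 1) * ψ x := by
    rw [Chebyshev.psi, Finset.mul_sum, Finset.mul_sum, ← Finset.sum_sub_distrib,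
      ← Finset.sum_add_distrib]
    refine Finset.sum_congr rfl fun n _ ↦ ?_
    rw [psiError]
    ring
  have herror := abs_psiError_mul_log_add_sum_le hx
  rw [hsum_error, psiError] at herror
  have hmertens : |x * (∑ n ∈ Ioc 0 ⌊x⌋₊, Λ n / n - log x)| ≤ x * 11 := by
    rw [abs_mul, abs_of_pos hx0]
    gcongr
    exact mertens_vonMangoldt hx
  have hpsi := psi_le_six_mul hx0.le
  have hpsi0 := Chebyshev.psi_nonneg x
  have hγ := one_half_lt_eulerMascheroniConstant
  have hγ' := eulerMascheroniConstant_lt_two_thirds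
  have hγpsi : (eulerMascheroniConstant + 1) * ψ x ≤ 2 * (6 * x) := by gcongr; linarith
  have hγlog : (eulerMascheroniConstant + 1) * log x ≤ 2 * x :=
    mul_le_mul (by linarith) (by linarith) hlog0 (by norm_num)
  have hγpsi0 : 0 ≤ (eulerMascheroniConstant + 1) * ψ x := by positivity
  have hγlog0 : 0 ≤ (eulerMascheroniConstant + 1) * log x := by positivity
  rw [sum_selbergLambda]
  rw [abs_le] at herror hmertens ⊢
  constructor <;> linarith

/-! ### Mean values of divisor-antitone functions -/

/-- The logarithmic summatory function `∑ 1 ≤ n ≤ x, a n / n`. -/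
noncomputable def logSummatory (a : ℕ → ℝ) (x : ℝ) : ℝ := summatory (fun n ↦ a n / n) x

/-- The weighted logarithmic sum `∑ 1 ≤ n ≤ x, (a n / n) * log (x / n)`, which equals
`∫₁ˣ logSummatory a t / t dt`. -/
noncomputable def logMoment (a : ℕ → ℝ) (x : ℝ) : ℝ :=
  summatory (fun n ↦ a n / n * log (x / n)) x

lemma summatory_nonneg {a : ℕ → ℝ} (ha : ∀ n, 0 ≤ a n) (x : ℝ) : 0 ≤ summatory a x :=
  Finset.sum_nonneg fun n _ ↦ ha n

lemma summatory_mono {a : ℕ → ℝ} (ha : ∀ n, 0 ≤ a n) : Monotone (summatory a) := fun _ _ h ↦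
  Finset.sum_le_sum_of_subset_of_nonneg (Finset.Ioc_subset_Ioc_right (Nat.floor_mono h))
    fun n _ _ ↦ ha n

lemma logSummatory_nonneg {a : ℕ → ℝ} (ha : ∀ n, 0 ≤ a n) (x : ℝ) : 0 ≤ logSummatory a x :=
  summatory_nonneg (fun n ↦ div_nonneg (ha n) n.cast_nonneg) x

lemma logSummatory_mono {a : ℕ → ℝ} (ha : ∀ n, 0 ≤ a n) : Monotone (logSummatory a) :=
  summatory_mono fun n ↦ div_nonneg (ha n) n.cast_nonneg

lemma sum_div_mul_log_eq (a : ℕ → ℝ) (x : ℝ) :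
    ∑ n ∈ Ioc 0 ⌊x⌋₊, a n / n * log n = log x * logSummatory a x - logMoment a x := by
  rw [logSummatory, logMoment, summatory, summatory, Finset.mul_sum, ← Finset.sum_sub_distrib]
  refine Finset.sum_congr rfl fun n hn ↦ ?_
  rw [log_div_of_mem_Ioc_floor hn]
  ring

/-- An arithmetic function that is normalised by `f 1 = 1` and decreasing for divisibility, such as
the indicator function of a nonempty set of positive integers closed under divisors. Since `m ∣ 0`
for all `m` and `f 0 = 0`, such a function is nonnegative. -/
structure IsDivisorAntitone (f : ArithmeticFunction ℝ) : Prop where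
  map_one : f 1 = 1
  le_of_dvd : ∀ ⦃m n : ℕ⦄, m ∣ n → f n ≤ f m

/-- The amount by which `f` fails to satisfy `f log = f * Λ`. -/
noncomputable def logDefect (f : ArithmeticFunction ℝ) : ArithmeticFunction ℝ :=
  f * Λ - f.pmul ArithmeticFunction.log

lemma logDefect_apply (f : ArithmeticFunction ℝ) (n : ℕ) :
    logDefect f n = ∑ d ∈ n.divisorsAntidiagonal, f d.1 * Λ d.2 - f n * log n := by
  simp only [logDefect, sub_eq_add_neg, ArithmeticFunction.add_apply, ArithmeticFunction.neg_apply,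
    ArithmeticFunction.mul_apply, ArithmeticFunction.pmul_apply, ArithmeticFunction.log_apply]

lemma logDefect_eq_sum (f : ArithmeticFunction ℝ) (n : ℕ) :
    logDefect f n = ∑ d ∈ n.divisorsAntidiagonal, (f d.1 - f (d.1 * d.2)) * Λ d.2 := by
  rw [logDefect_apply, ← sum_divisorsAntidiagonal_vonMangoldt_snd, Finset.mul_sum,
    ← Finset.sum_sub_distrib]
  refine Finset.sum_congr rfl fun d hd ↦ ?_
  rw [(Nat.mem_divisorsAntidiagonal.mp hd).1, sub_mul]

lemma sum_div_mul_log_add_logSummatory_logDefect (f : ArithmeticFunction ℝ) (x : ℝ) :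
    ∑ n ∈ Ioc 0 ⌊x⌋₊, f n / n * log n + logSummatory (logDefect f) x =
      ∑ m ∈ Ioc 0 ⌊x⌋₊, f m / m * ∑ k ∈ Ioc 0 ⌊x / m⌋₊, Λ k / k := by
  simp only [Finset.mul_sum]
  rw [← sum_divisorsAntidiagonal_eq_sum_floor_div fun m k ↦ f m / m * (Λ k / k), logSummatory,
    summatory, ← Finset.sum_add_distrib]
  refine Finset.sum_congr rfl fun n _ ↦ ?_
  have hconv : ∑ d ∈ n.divisorsAntidiagonal, f d.1 / d.1 * (Λ d.2 / d.2) =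
      (∑ d ∈ n.divisorsAntidiagonal, f d.1 * Λ d.2) / n := by
    rw [Finset.sum_div]
    refine Finset.sum_congr rfl fun d hd ↦ ?_
    rw [← (Nat.mem_divisorsAntidiagonal.mp hd).1, Nat.cast_mul, div_mul_div_comm]
  rw [hconv, logDefect_apply]
  ring

lemma pmul_log_mul (f g : ArithmeticFunction ℝ) :
    (f * g).pmul ArithmeticFunction.log =
      f.pmul ArithmeticFunction.log * g + f * g.pmul ArithmeticFunction.log := by
  ext n
  simp only [ArithmeticFunction.pmul_apply, ArithmeticFunction.mul_apply,
    ArithmeticFunction.add_apply, ArithmeticFunction.log_apply, ← Finset.sum_add_distrib,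
    Finset.sum_mul]
  refine Finset.sum_congr rfl fun d hd ↦ ?_
  obtain ⟨hd1, hd2⟩ := Nat.ne_zero_of_mem_divisorsAntidiagonal hd
  rw [← (Nat.mem_divisorsAntidiagonal.mp hd).1, Nat.cast_mul,
    log_mul (by exact_mod_cast hd1) (by exact_mod_cast hd2)]
  ring

lemma mul_selbergLambda (f : ArithmeticFunction ℝ) :
    f * selbergLambda = (f.pmul ArithmeticFunction.log).pmul ArithmeticFunction.log
      + (logDefect f).pmul ArithmeticFunction.log + logDefect f * Λ := by
  have hdefect : f * Λ = logDefect f + f.pmul ArithmeticFunction.log := by simp [logDefect]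
  have hpmul_add : (f * Λ).pmul ArithmeticFunction.log =
      (logDefect f).pmul ArithmeticFunction.log
        + (f.pmul ArithmeticFunction.log).pmul ArithmeticFunction.log := by
    ext n
    simp [hdefect, add_mul]
  calc f * selbergLambda = f * ArithmeticFunction.pmul Λ ArithmeticFunction.log + f * Λ * Λ := by
        rw [selbergLambda, mul_add, mul_assoc]
    _ = (f * Λ).pmul ArithmeticFunction.log - f.pmul ArithmeticFunction.log * Λ + f * Λ * Λ := by
        rw [pmul_log_mul]
        ring
    _ = _ := by
        rw [hpmul_add, hdefect]
        ring

lemma sum_mul_summatory_selbergLambda (f : ArithmeticFunction ℝ) (x : ℝ) :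
    ∑ m ∈ Ioc 0 ⌊x⌋₊, f m * summatory selbergLambda (x / m) =
      ∑ n ∈ Ioc 0 ⌊x⌋₊, f n * log n ^ 2 + ∑ n ∈ Ioc 0 ⌊x⌋₊, logDefect f n * log n
        + ∑ n ∈ Ioc 0 ⌊x⌋₊, logDefect f n * ψ (x / n) := by
  have hleft := sum_divisorsAntidiagonal_eq_sum_floor_div (fun m k ↦ f m * selbergLambda k) x
  have hright := sum_divisorsAntidiagonal_eq_sum_floor_div (fun m k ↦ logDefect f m * Λ k) x
  simp only [← ArithmeticFunction.mul_apply, ← Finset.mul_sum] at hleft hright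
  simp only [summatory, Chebyshev.psi]
  rw [← hleft, ← hright, mul_selbergLambda]
  simp only [ArithmeticFunction.add_apply, ArithmeticFunction.pmul_apply,
    ArithmeticFunction.log_apply, Finset.sum_add_distrib]
  congr 3 with n
  ring

namespace IsDivisorAntitone

variable {f : ArithmeticFunction ℝ}

lemma nonneg (hf : IsDivisorAntitone f) (n : ℕ) : 0 ≤ f n := by
  simpa using hf.le_of_dvd (dvd_zero n)

lemma le_one (hf : IsDivisorAntitone f) (n : ℕ) : f n ≤ 1 :=
  (hf.le_of_dvd (one_dvd n)).trans_eq hf.map_one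

lemma one_le_summatory (hf : IsDivisorAntitone f) {x : ℝ} (hx : 1 ≤ x) : 1 ≤ summatory f x := by
  have hmem : 1 ∈ Ioc 0 ⌊x⌋₊ := Finset.mem_Ioc.mpr ⟨one_pos, (Nat.one_le_floor_iff x).mpr hx⟩
  exact hf.map_one.ge.trans (Finset.single_le_sum (f := f) (fun n _ ↦ hf.nonneg n) hmem)

lemma logDefect_nonneg (hf : IsDivisorAntitone f) (n : ℕ) : 0 ≤ logDefect f n := by
  rw [logDefect_eq_sum]
  exact Finset.sum_nonneg fun d _ ↦
    mul_nonneg (sub_nonneg.mpr (hf.le_of_dvd (dvd_mul_right _ _))) vonMangoldt_nonneg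

lemma abs_log_mul_logSummatory_sub_le (hf : IsDivisorAntitone f) (x : ℝ) :
    |log x * logSummatory f x - 2 * logMoment f x + logSummatory (logDefect f) x| ≤
      11 * logSummatory f x := by
  have hsplit := sum_div_mul_log_add_logSummatory_logDefect f x
  rw [sum_div_mul_log_eq] at hsplit
  have heq : log x * logSummatory f x - 2 * logMoment f x + logSummatory (logDefect f) x =
      ∑ m ∈ Ioc 0 ⌊x⌋₊, f m / m * (∑ k ∈ Ioc 0 ⌊x / m⌋₊, Λ k / k - log (x / m)) := by
    simp only [mul_sub, Finset.sum_sub_distrib, ← hsplit, logMoment, summatory]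
    ring
  rw [heq, logSummatory, summatory, Finset.mul_sum]
  refine (Finset.abs_sum_le_sum_abs _ _).trans (Finset.sum_le_sum fun m hm ↦ ?_)
  have hfm : 0 ≤ f m / m := div_nonneg (hf.nonneg m) m.cast_nonneg
  rw [abs_mul, abs_of_nonneg hfm, mul_comm]
  gcongr
  exact mertens_vonMangoldt (one_le_div_of_mem_Ioc_floor hm)

lemma log_sub_mul_logSummatory_le (hf : IsDivisorAntitone f) (x : ℝ) :
    (log x - 11) * logSummatory f x ≤ 2 * logMoment f x := by
  linarith [(abs_le.mp (hf.abs_log_mul_logSummatory_sub_le x)).2,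
    logSummatory_nonneg hf.logDefect_nonneg x]

lemma abs_sum_mul_summatory_selbergLambda_sub_le (hf : IsDivisorAntitone f) (x : ℝ) :
    |∑ m ∈ Ioc 0 ⌊x⌋₊, f m * summatory selbergLambda (x / m) - 2 * x * logMoment f x| ≤
      200 * x * logSummatory f x := by
  rw [logMoment, logSummatory, summatory, summatory, Finset.mul_sum, ← Finset.sum_sub_distrib,
    Finset.mul_sum]
  refine (Finset.abs_sum_le_sum_abs _ _).trans (Finset.sum_le_sum fun m hm ↦ ?_)
  have hf0 := hf.nonneg m
  calc |f m * summatory selbergLambda (x / m) - 2 * x * (f m / m * log (x / m))|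
      = f m * |summatory selbergLambda (x / m) - 2 * (x / m) * log (x / m)| := by
        rw [← abs_of_nonneg hf0, ← abs_mul, abs_of_nonneg hf0]
        congr 1
        ring
    _ ≤ f m * (200 * (x / m)) := by
        gcongr
        exact selberg_symmetry_formula (one_le_div_of_mem_Ioc_floor hm)
    _ = 200 * x * (f m / m) := by ring

lemma sum_mul_log_sq_bounds (hf : IsDivisorAntitone f) {x : ℝ} (hx : 1 ≤ x) :
    ∑ n ∈ Ioc 0 ⌊x⌋₊, f n * log n ^ 2 ≤ summatory f x * log x ^ 2 ∧
      summatory f x * log x ^ 2 ≤ ∑ n ∈ Ioc 0 ⌊x⌋₊, f n * log n ^ 2 + 10 * x * log x := by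
  have hlog0 := log_nonneg hx
  have hlog_le {n : ℕ} (hn : n ∈ Ioc 0 ⌊x⌋₊) : log n ≤ log x := by
    linarith [log_div_nonneg_of_mem_Ioc_floor hn, log_div_of_mem_Ioc_floor hn]
  rw [summatory, Finset.sum_mul]
  constructor
  · refine Finset.sum_le_sum fun n hn ↦ mul_le_mul_of_nonneg_left ?_ (hf.nonneg n)
    have := hlog_le hn
    gcongr
  · have hterm : ∀ n ∈ Ioc 0 ⌊x⌋₊,
        f n * log x ^ 2 ≤ f n * log n ^ 2 + 2 * log x * log (x / n) := fun n hn ↦ by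
      have := log_natCast_nonneg n
      have hdiff : f n * ((log x + log n) * (log x - log n)) ≤
          1 * ((2 * log x) * (log x - log n)) := by
        have := hlog_le hn
        have := hf.le_one n
        have : 0 ≤ log x - log n := by linarith
        gcongr
        linarith
      rw [log_div_of_mem_Ioc_floor hn]
      linarith
    have hsum := Finset.sum_le_sum hterm
    rw [Finset.sum_add_distrib, ← Finset.mul_sum] at hsum
    have := mul_le_mul_of_nonneg_left (sum_log_div_le hx) (mul_nonneg zero_le_two hlog0)
    linarith

lemma abs_summatory_mul_log_sq_sub_le (hf : IsDivisorAntitone f) {x : ℝ} (hx : 1 ≤ x) :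
    |summatory f x * log x ^ 2 - 2 * x * logMoment f x| ≤
      200 * x * logSummatory f x + 10 * x * log x + log x * summatory (logDefect f) x
        + 6 * x * logSummatory (logDefect f) x := by
  have hdefect := hf.logDefect_nonneg
  have hlog0 : 0 ≤ ∑ n ∈ Ioc 0 ⌊x⌋₊, logDefect f n * log n :=
    Finset.sum_nonneg fun n _ ↦ mul_nonneg (hdefect n) (log_natCast_nonneg n)
  have hlog : ∑ n ∈ Ioc 0 ⌊x⌋₊, logDefect f n * log n ≤ log x * summatory (logDefect f) x := by
    rw [summatory, Finset.mul_sum]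
    refine Finset.sum_le_sum fun n hn ↦ ?_
    rw [mul_comm]
    refine mul_le_mul_of_nonneg_right ?_ (hdefect n)
    linarith [log_div_nonneg_of_mem_Ioc_floor hn, log_div_of_mem_Ioc_floor hn]
  have hpsi0 : 0 ≤ ∑ n ∈ Ioc 0 ⌊x⌋₊, logDefect f n * ψ (x / n) :=
    Finset.sum_nonneg fun n _ ↦ mul_nonneg (hdefect n) (Chebyshev.psi_nonneg _)
  have hpsi : ∑ n ∈ Ioc 0 ⌊x⌋₊, logDefect f n * ψ (x / n) ≤
      6 * x * logSummatory (logDefect f) x := by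
    rw [logSummatory, summatory, Finset.mul_sum]
    refine Finset.sum_le_sum fun n _ ↦ ?_
    calc logDefect f n * ψ (x / n) ≤ logDefect f n * (6 * (x / n)) :=
          mul_le_mul_of_nonneg_left (psi_le_six_mul (by positivity)) (hdefect n)
      _ = 6 * x * (logDefect f n / n) := by ring
  have hxlog : 0 ≤ 10 * x * log x := by have := log_nonneg hx; positivity
  obtain ⟨hsq, hsq'⟩ := hf.sum_mul_log_sq_bounds hx
  have hselberg := hf.abs_sum_mul_summatory_selbergLambda_sub_le x
  rw [sum_mul_summatory_selbergLambda, abs_le] at hselberg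
  rw [abs_le]
  constructor <;> linarith

end IsDivisorAntitone

lemma sum_one_div_le_two_mul_log :
    ∀ᶠ x : ℝ in atTop, ∑ n ∈ Ioc 0 ⌊x⌋₊, (1 : ℝ) / n ≤ 2 * log x := by
  filter_upwards [eventually_ge_atTop 1, tendsto_log_atTop.eventually_ge_atTop 3] with x hx hlog
  have hharmonic := (abs_le.mp (abs_sum_one_div_sub_le hx)).2
  have hdiv : 2 / x ≤ 2 := div_le_self zero_le_two hx
  linarith [eulerMascheroniConstant_lt_two_thirds]

lemma eventually_logSummatory_le {b : ℕ → ℝ} {D : ℝ → ℝ} (hb : ∀ n, 0 ≤ b n) (hD : Monotone D)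
    (hD1 : ∀ᶠ x in atTop, 1 ≤ D x) {ε : ℝ} (hε : 0 < ε)
    (hbD : ∀ᶠ x in atTop, summatory b x ≤ ε * (x * D x)) :
    ∀ᶠ x in atTop, logSummatory b x ≤ 3 * ε * (log x * D x) := by
  obtain ⟨X, hX⟩ := eventually_atTop.mp (hbD.and (hD1.and (eventually_ge_atTop 0)))
  filter_upwards [eventually_ge_atTop 1, eventually_ge_atTop X, sum_one_div_le_two_mul_log,
    tendsto_log_atTop.eventually_ge_atTop (summatory b X / ε)] with x hx hXx hharmonic hlog
  have hDx : 1 ≤ D x := (hX x hXx).2.1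
  have hlinear (n : ℕ) (hn : n ≤ ⌊x⌋₊) :
      ∑ i ∈ Ioc 0 n, b i ≤ ε * D x * n + summatory b X := by
    have hnx : (n : ℝ) ≤ x := (Nat.le_floor_iff (by linarith)).mp hn
    have hsum : ∑ i ∈ Ioc 0 n, b i = summatory b n := by rw [summatory, Nat.floor_natCast]
    have hlin : 0 ≤ ε * D x * n := by positivity
    rw [hsum]
    rcases le_total X n with hXn | hnX
    · calc summatory b n ≤ ε * (n * D n) := (hX n hXn).1
        _ ≤ ε * (n * D x) := by gcongr; exact hD hnx
        _ = ε * D x * n := by ring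
        _ ≤ _ := le_add_of_nonneg_right (summatory_nonneg hb X)
    · linarith [summatory_mono hb hnX]
  have habel := sum_mul_le_of_sum_le_linear (f := fun n ↦ 1 / (n : ℝ))
    ((Nat.one_le_floor_iff x).mpr hx) hlinear (by positivity) fun m hm n _ hmn ↦ by
      have : (0 : ℝ) < m := by exact_mod_cast hm.1
      dsimp only
      gcongr
  simp only [mul_one_div, Nat.cast_one, div_one, mul_one] at habel
  rw [div_le_iff₀ hε] at hlog
  have hlog0 := log_nonneg hx
  calc logSummatory b x ≤ ε * D x * ∑ i ∈ Ioc 0 ⌊x⌋₊, 1 / (i : ℝ) + summatory b X := habel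
    _ ≤ ε * D x * (2 * log x) + ε * log x * 1 := by gcongr; linarith
    _ ≤ ε * D x * (2 * log x) + ε * log x * D x := by gcongr
    _ = 3 * ε * (log x * D x) := by ring

lemma logSummatory_isLittleO {b : ℕ → ℝ} {D : ℝ → ℝ} (hb : ∀ n, 0 ≤ b n) (hD : Monotone D)
    (hD1 : ∀ᶠ x in atTop, 1 ≤ D x) (hbD : summatory b =o[atTop] fun x ↦ x * D x) :
    logSummatory b =o[atTop] fun x ↦ log x * D x := by
  refine isLittleO_iff.mpr fun ε hε ↦ ?_
  have hbound : ∀ᶠ x in atTop, summatory b x ≤ ε / 3 * (x * D x) := by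
    filter_upwards [hbD.bound (by positivity : 0 < ε / 3), hD1, eventually_ge_atTop 0]
      with x h hDx hx
    rwa [norm_of_nonneg (summatory_nonneg hb x), norm_of_nonneg (by positivity)] at h
  filter_upwards [eventually_logSummatory_le hb hD hD1 (by positivity) hbound, hD1,
    eventually_ge_atTop 1] with x h hDx hx
  have hlog := log_nonneg hx
  rw [norm_of_nonneg (logSummatory_nonneg hb x), norm_of_nonneg (by positivity)]
  linarith

lemma logMoment_bounds {a : ℕ → ℝ} (ha : ∀ n, 0 ≤ a n) {x y : ℝ} (hy : 0 < y) (hyx : y ≤ x) :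
    logMoment a y + log (x / y) * logSummatory a y ≤ logMoment a x ∧
      logMoment a x ≤ logMoment a y + log (x / y) * logSummatory a x := by
  have hx : 0 < x := hy.trans_le hyx
  have hdiv (n : ℕ) : 0 ≤ a n / n := div_nonneg (ha n) n.cast_nonneg
  have hhead : ∑ n ∈ Ioc 0 ⌊y⌋₊, a n / n * log (x / n) =
      ∑ n ∈ Ioc 0 ⌊y⌋₊, a n / n * log (y / n) + log (x / y) * ∑ n ∈ Ioc 0 ⌊y⌋₊, a n / n := by
    rw [Finset.mul_sum, ← Finset.sum_add_distrib]
    refine Finset.sum_congr rfl fun n hn ↦ ?_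
    rw [log_div_of_mem_Ioc_floor hn, log_div hx.ne' hy.ne',
      log_div_of_mem_Ioc_floor (Finset.Ioc_subset_Ioc_right (Nat.floor_mono hyx) hn)]
    ring
  have htail : ∑ n ∈ Ioc ⌊y⌋₊ ⌊x⌋₊, a n / n * log (x / n) ≤
      log (x / y) * ∑ n ∈ Ioc ⌊y⌋₊ ⌊x⌋₊, a n / n := by
    rw [Finset.mul_sum]
    refine Finset.sum_le_sum fun n hn ↦ ?_
    have hyn : y < n := (Nat.floor_lt hy.le).mp (Finset.mem_Ioc.mp hn).1
    have hn0 : (0 : ℝ) < n := hy.trans hyn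
    rw [mul_comm]
    gcongr
    exact hdiv n
  have htail0 : 0 ≤ ∑ n ∈ Ioc ⌊y⌋₊ ⌊x⌋₊, a n / n * log (x / n) :=
    Finset.sum_nonneg fun n hn ↦ mul_nonneg (hdiv n) <|
      log_div_nonneg_of_mem_Ioc_floor (Finset.Ioc_subset_Ioc_left (Nat.zero_le _) hn)
  simp only [logMoment, logSummatory, summatory]
  rw [← Finset.sum_Ioc_consecutive _ (Nat.zero_le _) (Nat.floor_mono hyx),
    ← Finset.sum_Ioc_consecutive (fun n : ℕ ↦ a n / n) (Nat.zero_le _) (Nat.floor_mono hyx), hhead]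
  constructor <;> linarith

lemma tendsto_log_div_log_const_mul {u : ℝ} (hu : 0 < u) :
    Tendsto (fun x ↦ log x / log (u * x)) atTop (𝓝 1) := by
  have hlim : Tendsto (fun x ↦ (log u / log x + 1)⁻¹) atTop (𝓝 1) := by
    simpa using ((tendsto_log_atTop.const_div_atTop (log u)).add_const 1).inv₀ (by simp)
  refine hlim.congr' ?_
  filter_upwards [eventually_gt_atTop 0, tendsto_log_atTop.eventually_gt_atTop 0] with x hx hlog
  rw [log_mul hu.ne' hx.ne', div_add_one hlog.ne', inv_div]

namespace IsDivisorAntitone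

variable {f : ArithmeticFunction ℝ}

lemma log_mul_logSummatory_le (hf : IsDivisorAntitone f) :
    ∀ᶠ x in atTop, log x * logSummatory f x ≤ 4 * logMoment f x := by
  filter_upwards [tendsto_log_atTop.eventually_ge_atTop 22] with x hlog
  nlinarith [hf.log_sub_mul_logSummatory_le x, logSummatory_nonneg hf.nonneg x]

lemma one_le_logSummatory (hf : IsDivisorAntitone f) {x : ℝ} (hx : 1 ≤ x) :
    1 ≤ logSummatory f x := by
  have hmem : 1 ∈ Ioc 0 ⌊x⌋₊ := Finset.mem_Ioc.mpr ⟨one_pos, (Nat.one_le_floor_iff x).mpr hx⟩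
  have h := Finset.single_le_sum (f := fun n : ℕ ↦ f n / n)
    (fun n _ ↦ div_nonneg (hf.nonneg n) n.cast_nonneg) hmem
  simpa [hf.map_one, logSummatory, summatory] using h

lemma logMoment_pos (hf : IsDivisorAntitone f) : ∀ᶠ x in atTop, 0 < logMoment f x := by
  filter_upwards [hf.log_mul_logSummatory_le, tendsto_log_atTop.eventually_gt_atTop 0,
    eventually_ge_atTop 1] with x hle hlog hx
  nlinarith [hf.one_le_logSummatory hx]

lemma tendsto_logMoment_ratio (hf : IsDivisorAntitone f) {u : ℝ} (hu : 0 < u) (hu1 : u ≤ 1) :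
    Tendsto (fun x ↦ logMoment f (u * x) / logMoment f x) atTop (𝓝 1) := by
  have hlogu : 0 ≤ log u⁻¹ := log_nonneg ((one_le_inv₀ hu).mpr hu1)
  have hbounds {x : ℝ} (hx : 0 < x) :
      logMoment f (u * x) + log u⁻¹ * logSummatory f (u * x) ≤ logMoment f x ∧
        logMoment f x ≤ logMoment f (u * x) + log u⁻¹ * logSummatory f x := by
    have h := logMoment_bounds hf.nonneg (mul_pos hu hx) (mul_le_of_le_one_left hx.le hu1)
    rwa [div_mul_cancel_right₀ hx.ne'] at h
  have hlim : Tendsto (fun x ↦ 1 - log u⁻¹ * 4 / log x) atTop (𝓝 1) := by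
    simpa using (tendsto_log_atTop.const_div_atTop (log u⁻¹ * 4)).const_sub 1
  refine tendsto_of_tendsto_of_tendsto_of_le_of_le' hlim tendsto_const_nhds ?_ ?_
  · filter_upwards [hf.logMoment_pos, hf.log_mul_logSummatory_le, eventually_gt_atTop 0,
      tendsto_log_atTop.eventually_gt_atTop 0] with x hpos hle hx hlog
    have hsum : logSummatory f x ≤ 4 * logMoment f x / log x := by
      rwa [le_div_iff₀ hlog, mul_comm]
    rw [le_div_iff₀ hpos]
    calc (1 - log u⁻¹ * 4 / log x) * logMoment f x
        = logMoment f x - log u⁻¹ * (4 * logMoment f x / log x) := by ring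
      _ ≤ logMoment f x - log u⁻¹ * logSummatory f x := by gcongr
      _ ≤ logMoment f (u * x) := by linarith [(hbounds hx).2]
  · filter_upwards [hf.logMoment_pos, eventually_gt_atTop 0] with x hpos hx
    have hprod := mul_nonneg hlogu (logSummatory_nonneg hf.nonneg (u * x))
    exact (div_le_one hpos).mpr (by linarith [(hbounds hx).1])

lemma summatory_mul_log_sq_isEquivalent (hf : IsDivisorAntitone f)
    (htop : Tendsto (logSummatory f) atTop atTop)
    (hdefect : summatory (logDefect f) =o[atTop] fun x ↦ x * logSummatory f x) :
    (fun x ↦ summatory f x * log x ^ 2) ~[atTop] fun x ↦ 2 * x * logMoment f x := by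
  set D := logSummatory f
  have h_one_log : (fun _ ↦ (1 : ℝ)) =o[atTop] log := isLittleO_const_log_atTop
  have h_one_D : (fun _ ↦ (1 : ℝ)) =o[atTop] D :=
    (isLittleO_const_left_of_ne one_ne_zero).mpr (tendsto_norm_atTop_atTop.comp htop)
  have hlogDefect := logSummatory_isLittleO hf.logDefect_nonneg (logSummatory_mono hf.nonneg)
    (htop.eventually_ge_atTop 1) hdefect
  have hterm1 : (fun x ↦ 200 * x * D x) =o[atTop] fun x ↦ x * (log x * D x) :=
    (((isBigO_refl (fun x ↦ x * D x) atTop).const_mul_left 200).mul_isLittleO h_one_log).congr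
      (fun x ↦ by ring) fun x ↦ by ring
  have hterm2 : (fun x ↦ 10 * x * log x) =o[atTop] fun x ↦ x * (log x * D x) :=
    (((isBigO_refl (fun x ↦ x * log x) atTop).const_mul_left 10).mul_isLittleO h_one_D).congr
      (fun x ↦ by ring) fun x ↦ by ring
  have hterm3 : (fun x ↦ log x * summatory (logDefect f) x) =o[atTop]
      fun x ↦ x * (log x * D x) :=
    ((isBigO_refl log atTop).mul_isLittleO hdefect).congr_right fun x ↦ by ring
  have hterm4 : (fun x ↦ 6 * x * logSummatory (logDefect f) x) =o[atTop]
      fun x ↦ x * (log x * D x) :=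
    ((isBigO_refl (fun x : ℝ ↦ x) atTop).const_mul_left 6).mul_isLittleO hlogDefect
  have hmain : (fun x ↦ x * (log x * D x)) =O[atTop] fun x ↦ 2 * x * logMoment f x := by
    refine IsBigO.of_bound 2 ?_
    filter_upwards [hf.log_mul_logSummatory_le, hf.logMoment_pos, eventually_ge_atTop 1]
      with x hle hpos hx
    have hD := logSummatory_nonneg hf.nonneg x
    have hlog := log_nonneg hx
    rw [norm_of_nonneg (by positivity), norm_of_nonneg (by positivity)]
    nlinarith
  refine IsBigO.trans_isLittleO (IsBigO.of_bound 1 ?_)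
    ((((hterm1.add hterm2).add hterm3).add hterm4).trans_isBigO hmain)
  filter_upwards [eventually_ge_atTop 1] with x hx
  rw [one_mul, norm_eq_abs, norm_eq_abs]
  exact (hf.abs_summatory_mul_log_sq_sub_le hx).trans (le_abs_self _)

theorem tendsto_summatory_ratio (hf : IsDivisorAntitone f)
    (htop : Tendsto (logSummatory f) atTop atTop)
    (hdefect : summatory (logDefect f) =o[atTop] fun x ↦ x * logSummatory f x)
    {u : ℝ} (hu : 0 < u) (hu1 : u ≤ 1) :
    Tendsto (fun x ↦ summatory f (u * x) / summatory f x) atTop (𝓝 u) := by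
  have hux : Tendsto (fun x ↦ u * x) atTop atTop := tendsto_id.const_mul_atTop hu
  have hequiv := hf.summatory_mul_log_sq_isEquivalent htop hdefect
  have hmoment : Tendsto (fun x ↦ 2 * (u * x) * logMoment f (u * x) / (2 * x * logMoment f x))
      atTop (𝓝 u) := by
    have hlim := (hf.tendsto_logMoment_ratio hu hu1).const_mul u
    rw [mul_one] at hlim
    refine hlim.congr' ?_
    filter_upwards [eventually_gt_atTop 0, hf.logMoment_pos] with x hx hpos
    field_simp
  have hratio := ((hequiv.comp_tendsto hux).div hequiv).symm.tendsto_nhds hmoment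
  have hlim := hratio.mul ((tendsto_log_div_log_const_mul hu).pow 2)
  rw [one_pow, mul_one] at hlim
  refine hlim.congr' ?_
  filter_upwards [tendsto_log_atTop.eventually_gt_atTop 0,
    (tendsto_log_atTop.comp hux).eventually_gt_atTop 0] with x hlog hlogu
  have hlogu' : log (u * x) ≠ 0 := hlogu.ne'
  simp only [Function.comp_apply, Pi.div_apply]
  field_simp

end IsDivisorAntitone

/-! ### Power moments of a regularly varying summatory function -/

lemma summatory_mul_pow_eq {a : ℕ → ℝ} (ha0 : a 0 = 0) (k : ℕ) {x : ℝ} (hx : 0 < x) :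
    summatory (fun n ↦ a n * n ^ k) x =
      x ^ k * (summatory a x - ∫ u in (0 : ℝ)..1, k * u ^ (k - 1) * summatory a (u * x)) := by
  have hIcc (g : ℕ → ℝ) (hg : g 0 = 0) (N : ℕ) : ∑ n ∈ Icc 0 N, g n = ∑ n ∈ Ioc 0 N, g n := by
    rw [← Finset.add_sum_Ioc_eq_sum_Icc N.zero_le, hg, zero_add]
  have hderiv : deriv (fun t : ℝ ↦ t ^ k) = fun t ↦ (k : ℝ) * t ^ (k - 1) :=
    funext fun _ ↦ deriv_pow_field k
  have habel := sum_mul_eq_sub_integral_mul (f := fun t : ℝ ↦ t ^ k) a hx.le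
    (fun t _ ↦ by fun_prop) (by rw [hderiv]; exact Continuous.integrableOn_Icc (by fun_prop))
  simp only [hIcc a ha0, hderiv] at habel
  rw [hIcc _ (by simp [ha0]), ← intervalIntegral.integral_of_le hx.le] at habel
  have hsubst := intervalIntegral.integral_comp_mul_right (a := 0) (b := 1)
    (fun t ↦ k * t ^ (k - 1) * summatory a t) hx.ne'
  simp only [zero_mul, one_mul, mul_pow, smul_eq_mul] at hsubst
  have hscale : ∫ t in (0 : ℝ)..x, k * t ^ (k - 1) * summatory a t =
      x ^ k * ∫ u in (0 : ℝ)..1, k * u ^ (k - 1) * summatory a (u * x) := by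
    rw [← mul_inv_cancel_left₀ hx.ne' (∫ t in (0 : ℝ)..x, _), ← hsubst,
      ← intervalIntegral.integral_const_mul, ← intervalIntegral.integral_const_mul]
    congr 1 with u
    rcases k with - | k
    · simp
    · rw [Nat.add_sub_cancel]
      ring
  rw [mul_sub, ← hscale]
  simpa only [summatory, mul_comm] using habel

lemma tendsto_integral_summatory_ratio {a : ℕ → ℝ} (ha : ∀ n, 0 ≤ a n)
    (hpos : ∀ᶠ x in atTop, 0 < summatory a x)
    (hreg : ∀ u : ℝ, 0 < u → u ≤ 1 →
      Tendsto (fun x ↦ summatory a (u * x) / summatory a x) atTop (𝓝 u)) (k : ℕ) :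
    Tendsto (fun x ↦ ∫ u in (0 : ℝ)..1, k * u ^ (k - 1) * (summatory a (u * x) / summatory a x))
      atTop (𝓝 (∫ u in (0 : ℝ)..1, k * u ^ (k - 1) * u)) := by
  refine intervalIntegral.tendsto_integral_filter_of_dominated_convergence (fun _ ↦ (k : ℝ))
    (.of_forall fun x ↦ ?_) ?_ (by simp) (.of_forall fun u hu ↦ ?_)
  · have := (summatory_mono ha).measurable
    fun_prop
  · filter_upwards [hpos, eventually_ge_atTop 0] with x hApos hx
    refine .of_forall fun u hu ↦ ?_
    rw [Set.uIoc_of_le zero_le_one] at hu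
    obtain ⟨hu0, hu1⟩ := hu
    have hA0 := summatory_nonneg ha (u * x)
    have hle : summatory a (u * x) ≤ summatory a x :=
      summatory_mono ha (mul_le_of_le_one_left hx hu1)
    rw [norm_of_nonneg (by positivity)]
    calc k * u ^ (k - 1) * (summatory a (u * x) / summatory a x) ≤ k * 1 * 1 := by
          gcongr
          · exact pow_le_one₀ hu0.le hu1
          · exact (div_le_one hApos).mpr hle
      _ = k := by ring
  · rw [Set.uIoc_of_le zero_le_one] at hu
    exact (hreg u hu.1 hu.2).const_mul _

theorem summatory_mul_pow_isEquivalent {a : ℕ → ℝ} (ha0 : a 0 = 0) (ha : ∀ n, 0 ≤ a n)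
    (hpos : ∀ᶠ x in atTop, 0 < summatory a x)
    (hreg : ∀ u : ℝ, 0 < u → u ≤ 1 →
      Tendsto (fun x ↦ summatory a (u * x) / summatory a x) atTop (𝓝 u)) (k : ℕ) :
    summatory (fun n ↦ a n * n ^ k) ~[atTop] fun x ↦ summatory a x * x ^ k / (k + 1) := by
  have hintegral : ∫ u in (0 : ℝ)..1, k * u ^ (k - 1) * u = 1 - 1 / (k + 1) := by
    have hpow (u : ℝ) : k * u ^ (k - 1) * u = k * u ^ k := by
      rcases k with - | k
      · simp
      · rw [Nat.add_sub_cancel]; ring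
    simp only [hpow, intervalIntegral.integral_const_mul, integral_pow]
    field_simp
    simp
  have hlim := tendsto_integral_summatory_ratio ha hpos hreg k
  rw [hintegral] at hlim
  have hratio := (hlim.const_sub 1).mul_const ((k : ℝ) + 1)
  rw [sub_sub_cancel, one_div_mul_cancel (by positivity)] at hratio
  refine isEquivalent_of_tendsto_one (hratio.congr' ?_)
  filter_upwards [hpos, eventually_gt_atTop 0] with x hApos hx
  simp only [Pi.div_apply, summatory_mul_pow_eq ha0 k hx, mul_div_assoc',
    intervalIntegral.integral_div]
  generalize ∫ u in (0 : ℝ)..1, k * u ^ (k - 1) * summatory a (u * x) = J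
  field_simp

/-! ### Growth of the logarithmic summatory function -/

lemma rpow_isLittleO_rpow_atTop {p q : ℝ} (hpq : p < q) :
    (fun x : ℝ ↦ x ^ p) =o[atTop] fun x ↦ x ^ q := by
  refine isLittleO_of_tendsto' ?_ ((tendsto_rpow_neg_atTop (sub_pos.mpr hpq)).congr' ?_)
  · filter_upwards [eventually_gt_atTop 0] with x hx hxq
    exact absurd hxq (rpow_pos_of_pos hx q).ne'
  · filter_upwards [eventually_gt_atTop 0] with x hx
    rw [neg_sub, rpow_sub hx]

lemma exists_mul_rpow_le_of_rpow_mul_le {F : ℝ → ℝ} {c t₀ r κ : ℝ} (hc : 0 < c) (ht₀ : 0 < t₀)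
    (hr : 1 < r) (hκ : 0 ≤ κ) (hF : ∀ t, t₀ ≤ t → c ≤ F t)
    (hscale : ∀ t, t₀ ≤ t → r ^ κ * F t ≤ F (r * t)) :
    ∃ K > 0, ∀ t, t₀ ≤ t → K * t ^ κ ≤ F t := by
  have hr0 : 0 < r := zero_lt_one.trans hr
  have hiter (i : ℕ) : ∀ t, t₀ ≤ t → (r ^ κ) ^ i * F t ≤ F (r ^ i * t) := by
    induction i with
    | zero => simp
    | succ i ih =>
      intro t ht
      have hstep : t₀ ≤ r ^ i * t := ht.trans <|
        le_mul_of_one_le_left (ht₀.le.trans ht) (one_le_pow₀ hr.le)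
      calc (r ^ κ) ^ (i + 1) * F t = r ^ κ * ((r ^ κ) ^ i * F t) := by ring
        _ ≤ r ^ κ * F (r ^ i * t) := by gcongr; exact ih t ht
        _ ≤ F (r * (r ^ i * t)) := hscale _ hstep
        _ = F (r ^ (i + 1) * t) := by ring_nf
  refine ⟨c / (r * t₀) ^ κ, by positivity, fun t ht ↦ ?_⟩
  obtain ⟨i, hlow, hup⟩ := exists_nat_pow_near ((one_le_div ht₀).mpr ht) hr
  rw [le_div_iff₀ ht₀] at hlow
  rw [div_lt_iff₀ ht₀] at hup
  have hsi : t₀ ≤ t / r ^ i := by rwa [le_div_iff₀' (by positivity)]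
  have htκ : t ^ κ ≤ (r ^ κ) ^ i * (r * t₀) ^ κ := by
    calc t ^ κ ≤ (r ^ i * (r * t₀)) ^ κ := by
          have ht0 : 0 ≤ t := ht₀.le.trans ht
          gcongr
          calc t ≤ r ^ (i + 1) * t₀ := hup.le
            _ = r ^ i * (r * t₀) := by ring
      _ = (r ^ κ) ^ i * (r * t₀) ^ κ := by
          rw [mul_rpow (by positivity) (by positivity), rpow_pow_comm hr0.le]
  calc c / (r * t₀) ^ κ * t ^ κ ≤ c / (r * t₀) ^ κ * ((r ^ κ) ^ i * (r * t₀) ^ κ) := by gcongr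
    _ = (r ^ κ) ^ i * c := by field_simp
    _ ≤ (r ^ κ) ^ i * F (t / r ^ i) := by gcongr; exact hF _ hsi
    _ ≤ F (r ^ i * (t / r ^ i)) := hiter i _ hsi
    _ = F t := by rw [mul_div_cancel₀ _ (by positivity)]

lemma exists_rpow_le_one_add_mul_sub_one {α β : ℝ} (hαβ : α < β) :
    ∃ r : ℝ, 1 < r ∧ r ^ α ≤ 1 + β * (r - 1) := by
  have hderiv : HasDerivAt (fun r : ℝ ↦ r ^ α) α 1 := by
    simpa using hasDerivAt_rpow_const (x := 1) (p := α) (.inl one_ne_zero)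
  have hslope := (hasDerivWithinAt_iff_tendsto_slope' (Set.self_notMem_Ioi (a := (1 : ℝ)))).mp
    hderiv.hasDerivWithinAt
  obtain ⟨r, hlt, hr : 1 < r⟩ :=
    ((hslope.eventually_lt_const hαβ).and self_mem_nhdsWithin).exists
  refine ⟨r, hr, ?_⟩
  rw [slope_def_field, one_rpow, div_lt_iff₀ (sub_pos.mpr hr)] at hlt
  linarith

namespace IsDivisorAntitone

variable {f : ArithmeticFunction ℝ}

lemma eventually_two_mul_logMoment_le (hf : IsDivisorAntitone f) {ε γ : ℝ} (hγ : 1 + ε < γ)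
    (hdefect : ∀ᶠ x in atTop,
      logSummatory (logDefect f) x ≤ ε * (log x * logSummatory f x)) :
    ∀ᶠ x in atTop, 2 * logMoment f x ≤ γ * (log x * logSummatory f x) := by
  filter_upwards [hdefect, tendsto_log_atTop.eventually_ge_atTop (11 / (γ - (1 + ε)))]
    with x hx hlog
  rw [div_le_iff₀ (sub_pos.mpr hγ)] at hlog
  have habs := (abs_le.mp (hf.abs_log_mul_logSummatory_sub_le x)).1
  have hmul := mul_le_mul_of_nonneg_right hlog (logSummatory_nonneg hf.nonneg x)
  linarith

lemma rpow_log_isBigO_logMoment (hf : IsDivisorAntitone f) {γ κ : ℝ} (hγ : 0 < γ) (hκ : 0 ≤ κ)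
    (hκγ : κ * γ < 2)
    (hupper : ∀ᶠ x in atTop, 2 * logMoment f x ≤ γ * (log x * logSummatory f x)) :
    (fun x ↦ log x ^ κ) =O[atTop] logMoment f := by
  obtain ⟨r, hr, hrpow⟩ := exists_rpow_le_one_add_mul_sub_one ((lt_div_iff₀ hγ).mpr hκγ)
  obtain ⟨t₀, hlate⟩ := eventually_atTop.mp <|
    (tendsto_exp_atTop.eventually (hupper.and hf.log_mul_logSummatory_le)).and
      (eventually_ge_atTop 1)
  simp only [log_exp] at hlate
  have hlow (t : ℝ) (ht : max t₀ 1 ≤ t) : 4⁻¹ ≤ logMoment f (exp t) := by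
    obtain ⟨⟨-, hle⟩, ht1⟩ := hlate t (le_of_max_le_left ht)
    nlinarith [hf.one_le_logSummatory (one_le_exp (zero_le_one.trans ht1))]
  -- For `M t := logMoment f (exp t)`, the hypothesis says that `M' ≥ 2 / (γ * t) * M`.
  have hscale (t : ℝ) (ht : max t₀ 1 ≤ t) :
      r ^ κ * logMoment f (exp t) ≤ logMoment f (exp (r * t)) := by
    obtain ⟨⟨hle, -⟩, ht1⟩ := hlate t (le_of_max_le_left ht)
    have hbound := (logMoment_bounds hf.nonneg (exp_pos t)
      (exp_le_exp.mpr (le_mul_of_one_le_left (zero_le_one.trans ht1) hr.le))).1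
    rw [← exp_sub, log_exp] at hbound
    have hM : 0 ≤ logMoment f (exp t) := le_trans (by norm_num) (hlow t ht)
    have hgain : 2 / γ * logMoment f (exp t) ≤ t * logSummatory f (exp t) := by
      rwa [div_mul_eq_mul_div, div_le_iff₀' hγ]
    calc r ^ κ * logMoment f (exp t) ≤ (1 + 2 / γ * (r - 1)) * logMoment f (exp t) := by gcongr
      _ = logMoment f (exp t) + (r - 1) * (2 / γ * logMoment f (exp t)) := by ring
      _ ≤ logMoment f (exp t) + (r - 1) * (t * logSummatory f (exp t)) :=
          add_le_add_right (mul_le_mul_of_nonneg_left hgain (sub_pos.mpr hr).le) _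
      _ ≤ logMoment f (exp (r * t)) := by linarith
  obtain ⟨K, hK, hpow⟩ := exists_mul_rpow_le_of_rpow_mul_le (by norm_num)
    (zero_lt_one.trans_le (le_max_right t₀ 1)) hr hκ hlow hscale
  refine IsBigO.of_bound K⁻¹ ?_
  filter_upwards [eventually_gt_atTop 0, tendsto_log_atTop.eventually_ge_atTop (max t₀ 1)]
    with x hx ht
  have hlog : 0 ≤ log x := zero_le_one.trans (le_of_max_le_right ht)
  have hmain := hpow _ ht
  rw [exp_log hx] at hmain
  rw [norm_of_nonneg (by positivity), le_inv_mul_iff₀ hK]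
  exact hmain.trans (le_abs_self _)

theorem rpow_log_isBigO_logSummatory (hf : IsDivisorAntitone f) {ε α : ℝ} (hε : 0 ≤ ε)
    (hα : 0 ≤ α) (hαε : (1 + α) * (1 + ε) < 2)
    (hdefect : ∀ᶠ x in atTop,
      logSummatory (logDefect f) x ≤ ε * (log x * logSummatory f x)) :
    (fun x ↦ log x ^ α) =O[atTop] logSummatory f := by
  obtain ⟨γ, hγ, hγα⟩ := exists_between ((lt_div_iff₀' (by positivity)).mpr hαε)
  rw [lt_div_iff₀' (by positivity)] at hγα
  have hγ0 : 0 < γ := by linarith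
  have hupper := hf.eventually_two_mul_logMoment_le hγ hdefect
  obtain ⟨K, hK, hpow⟩ :=
    (hf.rpow_log_isBigO_logMoment hγ0 (by positivity) hγα hupper).exists_pos
  refine IsBigO.of_bound (K * γ / 2) ?_
  filter_upwards [hpow.bound, hupper, hf.logMoment_pos,
    tendsto_log_atTop.eventually_gt_atTop 0] with x hle hup hpos hlog
  rw [norm_of_nonneg (by positivity), norm_of_nonneg hpos.le, rpow_add hlog, rpow_one] at hle
  rw [norm_of_nonneg (by positivity), norm_of_nonneg (logSummatory_nonneg hf.nonneg x)]
  refine le_of_mul_le_mul_left ?_ hlog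
  calc log x * log x ^ α ≤ K * logMoment f x := hle
    _ = K / 2 * (2 * logMoment f x) := by ring
    _ ≤ K / 2 * (γ * (log x * logSummatory f x)) := by gcongr
    _ = log x * (K * γ / 2 * logSummatory f x) := by ring

end IsDivisorAntitone

/-! ### Primes congruent to one modulo a prime -/

lemma dvd_prod_one_add_mul {r m K : ℕ} (hrm : r.Coprime m) (hm : m ∣ K.factorial) :
    m ∣ ∏ k ∈ range K, (1 + r * k) := by
  have hm0 : NeZero m := ⟨ne_zero_of_dvd_ne_zero K.factorial_ne_zero hm⟩
  set s := ((r : ZMod m)⁻¹).val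
  have hs : (r * s : ZMod m) = 1 := by
    rw [ZMod.natCast_zmod_val, ZMod.coe_mul_inv_eq_one r hrm]
  have hasc : m ∣ ∏ k ∈ range K, (s + k) := by
    rw [← Nat.ascFactorial_eq_prod_range]
    exact hm.trans (Nat.factorial_dvd_ascFactorial s K)
  rw [← ZMod.natCast_eq_zero_iff] at hasc ⊢
  push_cast at hasc ⊢
  calc ∏ k ∈ range K, (1 + (r : ZMod m) * k) = ∏ k ∈ range K, ((r : ZMod m) * (s + k)) := by
        simp only [mul_add, hs]
    _ = 0 := by rw [Finset.prod_mul_distrib, hasc, mul_zero]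

lemma prod_one_add_mul_le {r : ℕ} (hr : 0 < r) (K : ℕ) :
    ∏ k ∈ range K, (1 + r * k) ≤ r ^ K * K.factorial := by
  calc ∏ k ∈ range K, (1 + r * k) ≤ ∏ k ∈ range K, (r * (k + 1)) :=
        Finset.prod_le_prod' fun k _ ↦ by nlinarith
    _ = r ^ K * K.factorial := by
        rw [Finset.prod_mul_distrib, Finset.prod_range_add_one_eq_factorial, Finset.prod_const,
          Finset.card_range]

lemma prod_primes_one_mod_dvd (r K : ℕ) :
    ∏ q ∈ Ioc K (r * K) with q.Prime ∧ r ∣ q - 1, q ∣ ∏ k ∈ range K, (1 + r * k) := by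
  refine Finset.prod_primes_dvd _ (fun q hq ↦ (Finset.mem_filter.mp hq).2.1.prime) fun q hq ↦ ?_
  obtain ⟨hmem, hprime, k, hk⟩ := Finset.mem_filter.mp hq
  have hqk : q = 1 + r * k := by have := hprime.one_lt; omega
  have hkK : k < K := by
    by_contra! hKk
    have := Nat.mul_le_mul_left r hKk
    have := (Finset.mem_Ioc.mp hmem).2
    omega
  rw [hqk]
  exact Finset.dvd_prod_of_mem (fun k ↦ 1 + r * k) (Finset.mem_range.mpr hkK)

/-- Up to its `r`-part, `K!` divides `∏ k < K, (1 + r * k)`, and the quotient still contains all the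
primes in question. -/
lemma prod_primes_one_mod_le {r : ℕ} (hr : r.Prime) (K : ℕ) :
    ∏ q ∈ Ioc K (r * K) with q.Prime ∧ r ∣ q - 1, q ≤ r ^ (2 * K) := by
  set v := K.factorial.factorization r
  set m := K.factorial / r ^ v
  have hmK : r ^ v * m = K.factorial := Nat.ordProj_mul_ordCompl_eq_self _ _
  have hmdvd : m ∣ K.factorial := Dvd.intro_left _ hmK
  have hm0 : 0 < m := Nat.pos_of_dvd_of_pos hmdvd K.factorial_pos
  have hcop : (∏ q ∈ Ioc K (r * K) with q.Prime ∧ r ∣ q - 1, q).Coprime m := by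
    refine Nat.Coprime.prod_left fun q hq ↦ ?_
    obtain ⟨hmem, hprime, -⟩ := Finset.mem_filter.mp hq
    refine hprime.coprime_iff_not_dvd.mpr fun hqm ↦ ?_
    exact (Finset.mem_Ioc.mp hmem).1.not_ge (hprime.dvd_factorial.mp (hqm.trans hmdvd))
  have hdvd := hcop.mul_dvd_of_dvd_of_dvd (prod_primes_one_mod_dvd r K)
    (dvd_prod_one_add_mul (Nat.coprime_ordCompl hr K.factorial_ne_zero) hmdvd)
  have hvK : v ≤ K := by
    have := Fact.mk hr
    exact (Nat.factorization_def _ hr).trans_le (padicValNat_factorial_le r K)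
  have hle : (∏ q ∈ Ioc K (r * K) with q.Prime ∧ r ∣ q - 1, q) * m ≤ r ^ (K + v) * m :=
    calc _ ≤ ∏ k ∈ range K, (1 + r * k) :=
          Nat.le_of_dvd (Finset.prod_pos fun k _ ↦ by positivity) hdvd
      _ ≤ r ^ K * K.factorial := prod_one_add_mul_le hr.pos K
      _ = r ^ (K + v) * m := by rw [← hmK, pow_add, mul_assoc]
  exact (Nat.le_of_mul_le_mul_right hle hm0).trans (Nat.pow_le_pow_right hr.pos (by omega))

/-- The function `n ↦ log n` supported on the primes `n ≡ 1 (mod r)`, so that its summatory function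
is the Chebyshev function `θ(x; r, 1)`. -/
noncomputable def primeOneModLog (r n : ℕ) : ℝ := if n.Prime ∧ r ∣ n - 1 then log n else 0

lemma primeOneModLog_nonneg (r n : ℕ) : 0 ≤ primeOneModLog r n := by
  rw [primeOneModLog]
  split_ifs
  exacts [log_natCast_nonneg n, le_rfl]

lemma primeOneModLog_le_vonMangoldt (r n : ℕ) : primeOneModLog r n ≤ Λ n := by
  rw [primeOneModLog]
  split_ifs with h
  · rw [ArithmeticFunction.vonMangoldt_apply_prime h.1]
  · exact vonMangoldt_nonneg

lemma primeOneModLog_eq_zero_of_le {r n : ℕ} (h : n ≤ r) : primeOneModLog r n = 0 := by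
  refine if_neg fun ⟨hprime, hdvd⟩ ↦ ?_
  have := hprime.one_lt
  have := Nat.le_of_dvd (by omega) hdvd
  omega

lemma sum_Ioc_mul_primeOneModLog_le {r : ℕ} (hr : r.Prime) (K : ℕ) :
    ∑ q ∈ Ioc K (r * K), primeOneModLog r q ≤ 2 * K * log r := by
  have hpos : ∀ q ∈ {q ∈ Ioc K (r * K) | q.Prime ∧ r ∣ q - 1}, (0 : ℝ) < q := fun q hq ↦ by
    exact_mod_cast (Finset.mem_filter.mp hq).2.1.pos
  calc ∑ q ∈ Ioc K (r * K), primeOneModLog r q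
      = log (∏ q ∈ Ioc K (r * K) with q.Prime ∧ r ∣ q - 1, (q : ℝ)) := by
        rw [log_prod fun q hq ↦ (hpos q hq).ne', Finset.sum_filter]
        rfl
    _ ≤ log ((r : ℝ) ^ (2 * K)) := by
        refine log_le_log (Finset.prod_pos hpos) ?_
        rw [← Nat.cast_prod]
        exact_mod_cast prod_primes_one_mod_le hr K
    _ = 2 * K * log r := by rw [log_pow]; push_cast; ring

lemma sum_primeOneModLog_le {r : ℕ} (hr : r.Prime) (N : ℕ) :
    ∑ q ∈ Ioc 0 N, primeOneModLog r q ≤ 18 * N * (log r / r) := by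
  have hlog : 0 ≤ log (r : ℝ) := log_natCast_nonneg r
  rcases hr.two_le.eq_or_lt with rfl | hr3
  · have hpsi := psi_le_six_mul N.cast_nonneg
    rw [Chebyshev.psi, Nat.floor_natCast] at hpsi
    have hle := Finset.sum_le_sum fun q (_ : q ∈ Ioc 0 N) ↦ primeOneModLog_le_vonMangoldt 2 q
    push_cast
    nlinarith [log_two_gt_d9, (N.cast_nonneg : (0 : ℝ) ≤ N)]
  have hr3' : (3 : ℝ) ≤ r := by exact_mod_cast hr3
  induction N using Nat.strong_induction_on with
  | _ N ih =>
    rcases le_or_gt N r with hN | hN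
    · rw [Finset.sum_eq_zero fun q hq ↦
        primeOneModLog_eq_zero_of_le ((Finset.mem_Ioc.mp hq).2.trans hN)]
      positivity
    set K := N / r + 1
    have hKN : K < N := by
      have : N / r ≤ N / 3 := Nat.div_le_div_left hr3 (by norm_num)
      omega
    have hNK : N ≤ r * K := (Nat.lt_mul_div_succ N hr.pos).le
    have hK : (K : ℝ) ≤ 2 * N / r := by
      have hmul : K * r ≤ 2 * N := by
        rw [add_mul, one_mul]
        linarith [Nat.div_mul_le_self N r]
      rw [le_div_iff₀ (by linarith)]
      exact_mod_cast hmul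
    calc ∑ q ∈ Ioc 0 N, primeOneModLog r q ≤ ∑ q ∈ Ioc 0 (r * K), primeOneModLog r q :=
          Finset.sum_le_sum_of_subset_of_nonneg (Finset.Ioc_subset_Ioc_right hNK)
            fun q _ _ ↦ primeOneModLog_nonneg r q
      _ = ∑ q ∈ Ioc 0 K, primeOneModLog r q + ∑ q ∈ Ioc K (r * K), primeOneModLog r q :=
          (Finset.sum_Ioc_consecutive _ K.zero_le (hKN.le.trans hNK)).symm
      _ ≤ 18 * K * (log r / r) + 2 * K * log r :=
          add_le_add (ih K hKN) (sum_Ioc_mul_primeOneModLog_le hr K)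
      _ ≤ 18 * K * (log r / 3) + 2 * K * log r := by gcongr
      _ = 8 * log r * K := by ring
      _ ≤ 8 * log r * (2 * N / r) := by gcongr
      _ = 16 * N * (log r / r) := by ring
      _ ≤ 18 * N * (log r / r) := by gcongr; norm_num

theorem summatory_primeOneModLog_le {r : ℕ} (hr : r.Prime) {y : ℝ} (hy : 0 ≤ y) :
    summatory (primeOneModLog r) y ≤ 18 * y * (log r / r) := by
  refine (sum_primeOneModLog_le hr _).trans ?_
  have : 0 ≤ log (r : ℝ) / r := div_nonneg (log_natCast_nonneg r) r.cast_nonneg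
  gcongr
  exact Nat.floor_le hy

/-! ### Pairs of primes that cannot divide a common cyclic number -/

lemma summable_log_pow_div_sq (k : ℕ) : Summable fun n : ℕ ↦ log n ^ k / (n : ℝ) ^ 2 := by
  have hlog : (fun n : ℕ ↦ log n ^ k) =O[atTop] fun n : ℕ ↦ (n : ℝ) ^ (1 / 2 : ℝ) := by
    have h := isLittleO_log_rpow_rpow_atTop (s := 1 / 2) (k : ℝ) (by norm_num)
    simp only [rpow_natCast] at h
    exact h.isBigO.comp_tendsto tendsto_natCast_atTop_atTop
  refine summable_of_isBigO_nat (g := fun n : ℕ ↦ (n : ℝ) ^ (-(3 / 2) : ℝ))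
    (summable_nat_rpow.mpr (by norm_num)) ?_
  refine (hlog.mul (isBigO_refl (fun n : ℕ ↦ ((n : ℝ) ^ 2)⁻¹) atTop)).congr'
    (.of_forall fun n ↦ (div_eq_mul_inv _ _).symm) ?_
  filter_upwards [eventually_gt_atTop 0] with n hn
  have hn' : (0 : ℝ) < n := by exact_mod_cast hn
  rw [← rpow_natCast, ← rpow_neg hn'.le, ← rpow_add hn']
  norm_num

lemma exists_sum_Ioc_le_of_summable {g : ℕ → ℝ} (hg : Summable g) {ε : ℝ} (hε : 0 < ε) :
    ∃ R, ∀ N, ∑ n ∈ Ioc R N, g n ≤ ε := by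
  obtain ⟨s, hs⟩ := summable_iff_vanishing_norm.mp hg ε hε
  refine ⟨s.sup id, fun N ↦ (le_norm_self _).trans (hs _ ?_).le⟩
  refine Finset.disjoint_left.mpr fun n hn hns ↦ ?_
  exact (Finset.mem_Ioc.mp hn).1.not_ge (Finset.le_sup (f := id) hns)

lemma sum_floor_div_comm (F : ℕ → ℕ → ℝ) (x : ℝ) :
    ∑ m ∈ Ioc 0 ⌊x⌋₊, ∑ k ∈ Ioc 0 ⌊x / m⌋₊, F m k =
      ∑ k ∈ Ioc 0 ⌊x⌋₊, ∑ m ∈ Ioc 0 ⌊x / k⌋₊, F m k := by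
  rw [← sum_divisorsAntidiagonal_eq_sum_floor_div F,
    ← sum_divisorsAntidiagonal_eq_sum_floor_div fun k m ↦ F m k]
  refine Finset.sum_congr rfl fun n _ ↦ ?_
  nth_rewrite 1 [← Nat.map_swap_divisorsAntidiagonal]
  rw [Finset.sum_map]
  rfl

/-- For a prime `r`, the function `d ↦ log d` supported on the primes `d` such that `d = r` or
`r ≡ 1 (mod d)`. Together with the primes `d ≡ 1 (mod r)` carrying `primeOneModLog r`, these are the
primes `d` that cannot be adjoined to a cyclic number divisible by `r`. -/
noncomputable def lowerConflictLog (r d : ℕ) : ℝ :=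
  if d.Prime ∧ d ∣ r * (r - 1) then log d else 0

lemma lowerConflictLog_nonneg (r d : ℕ) : 0 ≤ lowerConflictLog r d := by
  rw [lowerConflictLog]
  split_ifs
  exacts [log_natCast_nonneg d, le_rfl]

lemma summatory_lowerConflictLog_le {r : ℕ} (hr : r.Prime) (y : ℝ) :
    summatory (lowerConflictLog r) y ≤ ∑ d ∈ (r * (r - 1)).primeFactors, log d := by
  have hne : r * (r - 1) ≠ 0 := Nat.mul_ne_zero hr.ne_zero (Nat.sub_pos_of_lt hr.one_lt).ne'
  simp only [summatory, lowerConflictLog]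
  rw [← Finset.sum_filter]
  refine Finset.sum_le_sum_of_subset_of_nonneg (fun d hd ↦ ?_) fun d _ _ ↦ log_natCast_nonneg d
  obtain ⟨-, hprime, hdvd⟩ := Finset.mem_filter.mp hd
  exact Nat.mem_primeFactors.mpr ⟨hprime, hdvd, hne⟩

lemma sum_log_primes_with_dvd_le {d : ℕ} (hd : d.Prime) {y : ℝ} (hy : 0 ≤ y) :
    ∑ r ∈ Ioc 0 ⌊y⌋₊ with r.Prime ∧ d ∣ r * (r - 1), log (r : ℝ) ≤ 19 * y * (log d / d) := by
  have hlog := log_natCast_nonneg d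
  have hpoint (r : ℕ) : (if r.Prime ∧ d ∣ r * (r - 1) then log (r : ℝ) else 0) ≤
      (if r = d then log (d : ℝ) else 0) + primeOneModLog d r := by
    split_ifs with h hrd hrd
    · simpa [hrd] using primeOneModLog_nonneg d d
    · have hdvd : d ∣ r - 1 := (hd.dvd_mul.mp h.2).resolve_left fun hdr ↦
        hrd ((Nat.prime_dvd_prime_iff_eq hd h.1).mp hdr).symm
      rw [primeOneModLog, if_pos ⟨h.1, hdvd⟩, zero_add]
    · exact add_nonneg hlog (primeOneModLog_nonneg d r)
    · simpa using primeOneModLog_nonneg d r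
  have hdiag : ∑ r ∈ Ioc 0 ⌊y⌋₊, (if r = d then log (d : ℝ) else 0) ≤ y * (log d / d) := by
    rw [Finset.sum_ite_eq']
    split_ifs with h
    · rw [mul_div_left_comm]
      exact le_mul_of_one_le_right hlog (one_le_div_of_mem_Ioc_floor h)
    · positivity
  rw [Finset.sum_filter]
  calc _ ≤ ∑ r ∈ Ioc 0 ⌊y⌋₊, ((if r = d then log (d : ℝ) else 0) + primeOneModLog d r) :=
        Finset.sum_le_sum fun r _ ↦ hpoint r
    _ ≤ y * (log d / d) + 18 * y * (log d / d) := by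
        rw [Finset.sum_add_distrib]
        exact add_le_add hdiag (summatory_primeOneModLog_le hd hy)
    _ = 19 * y * (log d / d) := by ring

lemma sum_log_mul_summatory_lowerConflictLog_le {z : ℝ} (hz : 0 ≤ z) :
    ∑ r ∈ Ioc 0 ⌊z⌋₊ with r.Prime, log (r : ℝ) * summatory (lowerConflictLog r) (z / r) ≤
      19 * (∑' n : ℕ, log n ^ 2 / (n : ℝ) ^ 2) * z := by
  calc _ = ∑ r ∈ Ioc 0 ⌊z⌋₊, ∑ d ∈ Ioc 0 ⌊z / r⌋₊,
          if r.Prime then log (r : ℝ) * lowerConflictLog r d else 0 := by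
        rw [Finset.sum_filter]
        refine Finset.sum_congr rfl fun r _ ↦ ?_
        split_ifs
        exacts [Finset.mul_sum _ _ _, Finset.sum_const_zero.symm]
    _ = ∑ d ∈ Ioc 0 ⌊z⌋₊, ∑ r ∈ Ioc 0 ⌊z / d⌋₊,
          if r.Prime then log (r : ℝ) * lowerConflictLog r d else 0 := sum_floor_div_comm _ z
    _ ≤ ∑ d ∈ Ioc 0 ⌊z⌋₊, 19 * z * (log d ^ 2 / (d : ℝ) ^ 2) := Finset.sum_le_sum fun d _ ↦ by
        by_cases hd : d.Prime
        · have hsum := mul_le_mul_of_nonneg_left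
            (sum_log_primes_with_dvd_le hd (div_nonneg hz d.cast_nonneg)) (log_natCast_nonneg d)
          rw [Finset.sum_filter, Finset.mul_sum] at hsum
          refine (Finset.sum_le_sum fun r _ ↦ ?_).trans (hsum.trans_eq (by ring))
          by_cases hr : r.Prime <;> by_cases hdr : d ∣ r * (r - 1) <;>
            simp [lowerConflictLog, hd, hr, hdr, mul_comm]
        · simp only [lowerConflictLog, hd, false_and, if_false, mul_zero, ite_self,
            Finset.sum_const_zero]
          positivity
    _ ≤ 19 * (∑' n : ℕ, log n ^ 2 / (n : ℝ) ^ 2) * z := by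
        rw [← Finset.mul_sum, mul_right_comm]
        gcongr
        exact (summable_log_pow_div_sq 2).sum_le_tsum _ fun n _ ↦ by positivity

lemma exists_sum_summatory_lowerConflictLog_le {ε : ℝ} (hε : 0 < ε) :
    ∃ C, 0 ≤ C ∧ ∀ z, 0 ≤ z →
      ∑ r ∈ Ioc 0 ⌊z⌋₊ with r.Prime, summatory (lowerConflictLog r) (z / r) ≤ ε * z + C := by
  set S := ∑' n : ℕ, log n ^ 2 / (n : ℝ) ^ 2
  obtain ⟨A, hA, hA0⟩ : ∃ A : ℕ, 19 * S / ε ≤ log A ∧ 0 < log (A : ℝ) :=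
    (((tendsto_log_atTop.comp tendsto_natCast_atTop_atTop).eventually_ge_atTop _).and
      ((tendsto_log_atTop.comp tendsto_natCast_atTop_atTop).eventually_gt_atTop 0)).exists
  have hApos : (0 : ℝ) < A := Nat.cast_pos.mpr (Nat.pos_of_ne_zero fun h ↦ by simp [h] at hA0)
  let c (r : ℕ) : ℝ := ∑ d ∈ (r * (r - 1)).primeFactors, log d
  have hc (r : ℕ) : 0 ≤ c r := Finset.sum_nonneg fun d _ ↦ log_natCast_nonneg d
  refine ⟨∑ r ∈ Ioc 0 A, c r, Finset.sum_nonneg fun r _ ↦ hc r, fun z hz ↦ ?_⟩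
  have hpoint {r : ℕ} (hr : r.Prime) : summatory (lowerConflictLog r) (z / r) ≤
      log r * summatory (lowerConflictLog r) (z / r) / log A + if r ≤ A then c r else 0 := by
    have hnonneg := summatory_nonneg (lowerConflictLog_nonneg r) (z / r)
    split_ifs with hrA
    · have := log_natCast_nonneg r
      exact (summatory_lowerConflictLog_le hr _).trans (le_add_of_nonneg_left (by positivity))
    · rw [add_zero, le_div_iff₀ hA0, mul_comm]
      gcongr
      omega
  calc _ ≤ ∑ r ∈ Ioc 0 ⌊z⌋₊ with r.Prime,
          (log r * summatory (lowerConflictLog r) (z / r) / log A + if r ≤ A then c r else 0) :=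
        Finset.sum_le_sum fun r hr ↦ hpoint (Finset.mem_filter.mp hr).2
    _ ≤ 19 * S * z / log A + ∑ r ∈ Ioc 0 A, c r := by
        rw [Finset.sum_add_distrib, ← Finset.sum_div, ← Finset.sum_filter]
        gcongr
        · exact sum_log_mul_summatory_lowerConflictLog_le hz
        · intro r hr
          simp only [Finset.mem_filter, Finset.mem_Ioc] at hr ⊢
          exact ⟨hr.1.1.1, hr.2⟩
    _ ≤ ε * z + ∑ r ∈ Ioc 0 A, c r := by
        gcongr
        rw [div_le_iff₀ hA0]
        nlinarith [(div_le_iff₀ hε).mp hA]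

lemma exists_sum_summatory_primeOneModLog_le {ε : ℝ} (hε : 0 < ε) :
    ∃ R, ∀ z, 0 ≤ z →
      ∑ r ∈ Ioc R ⌊z⌋₊ with r.Prime, summatory (primeOneModLog r) (z / r) ≤ ε * z := by
  obtain ⟨R, hR⟩ := exists_sum_Ioc_le_of_summable (summable_log_pow_div_sq 1)
    (show 0 < ε / 18 by positivity)
  refine ⟨R, fun z hz ↦ ?_⟩
  calc _ ≤ ∑ r ∈ Ioc R ⌊z⌋₊ with r.Prime, 18 * z * (log r ^ 1 / (r : ℝ) ^ 2) :=
        Finset.sum_le_sum fun r hr ↦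
          (summatory_primeOneModLog_le (Finset.mem_filter.mp hr).2
            (div_nonneg hz r.cast_nonneg)).trans_eq (by ring)
    _ ≤ ∑ r ∈ Ioc R ⌊z⌋₊, 18 * z * (log r ^ 1 / (r : ℝ) ^ 2) :=
        Finset.sum_le_sum_of_subset_of_nonneg (Finset.filter_subset _ _) fun r _ _ ↦ by
          have := log_natCast_nonneg r
          positivity
    _ ≤ 18 * z * (ε / 18) := by
        rw [← Finset.mul_sum]
        gcongr
        exact hR _
    _ = ε * z := by ring

/-! ### Cyclic numbers -/

lemma sum_range_floor_add_one {a : ℕ → ℝ} (ha : a 0 = 0) (x : ℝ) :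
    ∑ n ∈ range (⌊x⌋₊ + 1), a n = summatory a x := by
  rw [summatory, Nat.range_succ_eq_Icc_zero, ← Finset.add_sum_Ioc_eq_sum_Icc (Nat.zero_le _), ha,
    zero_add]

lemma isCyclicNum_one : IsCyclicNum 1 := ⟨one_pos, Nat.gcd_one_left _⟩

lemma isCyclicNum_of_prime {p : ℕ} (hp : p.Prime) : IsCyclicNum p := by
  refine ⟨hp.pos, ?_⟩
  rw [Nat.totient_prime hp, ← Nat.coprime_iff_gcd_eq_one]
  exact (Nat.coprime_self_sub_right hp.one_le).mpr (Nat.coprime_one_right p)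

namespace IsCyclicNum

variable {m n p q : ℕ}

lemma of_dvd (hn : IsCyclicNum n) (hmn : m ∣ n) : IsCyclicNum m :=
  ⟨Nat.pos_of_dvd_of_pos hmn hn.1, Nat.Coprime.of_dvd hmn (Nat.totient_dvd_of_dvd hmn) hn.2⟩

lemma not_dvd_sub_one (hn : IsCyclicNum n) (hp : p.Prime) (hpn : p ∣ n) (hq : q.Prime)
    (hqn : q ∣ n) : ¬p ∣ q - 1 := fun hpq ↦ by
  have hpφ : p ∣ n.totient :=
    hpq.trans (Nat.totient_prime hq ▸ Nat.totient_dvd_of_dvd hqn)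
  exact Nat.not_coprime_of_dvd_of_dvd hp.one_lt hpn hpφ hn.2

lemma mul_prime (hm : IsCyclicNum m) (hp : p.Prime)
    (hconflict : ∀ r ∈ m.primeFactors, ¬p ∣ r * (r - 1) ∧ ¬r ∣ p - 1) : IsCyclicNum (m * p) := by
  have hmem {r : ℕ} (hr : r.Prime) (hrm : r ∣ m) : r ∈ m.primeFactors :=
    Nat.mem_primeFactors.mpr ⟨hr, hrm, hm.1.ne'⟩
  have hpm : ¬p ∣ m := fun h ↦ (hconflict p (hmem hp h)).1 (dvd_mul_right _ _)
  have hpφ : ¬p ∣ m.totient := by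
    rw [Nat.totient_eq_div_primeFactors_mul, hp.dvd_mul, hp.prime.dvd_finsetProd_iff]
    rintro (hdvd | ⟨r, hr, hdvd⟩)
    · exact hpm (hdvd.trans (Nat.div_dvd_of_dvd (Nat.prod_primeFactors_dvd m)))
    · exact (hconflict r hr).1 (hdvd.mul_left r)
  have hcop : m.Coprime (p - 1) := Nat.coprime_of_dvd fun r hr hrm hrp ↦
    (hconflict r (hmem hr hrm)).2 hrp
  refine ⟨Nat.mul_pos hm.1 hp.pos, ?_⟩
  rw [Nat.totient_mul ((hp.coprime_iff_not_dvd.mpr hpm).symm), Nat.totient_prime hp]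
  exact ((Nat.Coprime.mul_right hm.2 hcop).mul_left
    ((hp.coprime_iff_not_dvd.mpr hpφ).mul_right
      (Nat.totient_prime hp ▸ (isCyclicNum_of_prime hp).2)))

end IsCyclicNum

open Classical in
/-- The indicator function of the cyclic numbers all of whose prime factors exceed `R`; for `R = 0`
these are all the cyclic numbers. -/
noncomputable def cyclicIndicator (R : ℕ) : ArithmeticFunction ℝ where
  toFun n := if IsCyclicNum n ∧ ∀ p, p.Prime → p ∣ n → R < p then 1 else 0
  map_zero' := if_neg fun h ↦ h.1.1.ne' rfl

section cyclicIndicator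

variable {R : ℕ}

lemma cyclicIndicator_eq_one {n : ℕ} (hn : IsCyclicNum n) (hR : ∀ p, p.Prime → p ∣ n → R < p) :
    cyclicIndicator R n = 1 := if_pos ⟨hn, hR⟩

lemma cyclicIndicator_eq_zero {n : ℕ} (h : ¬(IsCyclicNum n ∧ ∀ p, p.Prime → p ∣ n → R < p)) :
    cyclicIndicator R n = 0 := if_neg h

lemma cyclicIndicator_zero_apply (n : ℕ) :
    cyclicIndicator 0 n = if IsCyclicNum n then 1 else 0 := by
  split_ifs with hn
  · exact cyclicIndicator_eq_one hn fun p hp _ ↦ hp.pos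
  · exact cyclicIndicator_eq_zero fun h ↦ hn h.1

lemma isDivisorAntitone_cyclicIndicator (R : ℕ) : IsDivisorAntitone (cyclicIndicator R) where
  map_one := cyclicIndicator_eq_one isCyclicNum_one fun p hp hp1 ↦ absurd hp1 hp.not_dvd_one
  le_of_dvd m n hmn := by
    by_cases hn : IsCyclicNum n ∧ ∀ p, p.Prime → p ∣ n → R < p
    · rw [cyclicIndicator_eq_one hn.1 hn.2, cyclicIndicator_eq_one (hn.1.of_dvd hmn)
        fun p hp hpm ↦ hn.2 p hp (hpm.trans hmn)]
    · rw [cyclicIndicator_eq_zero hn]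
      by_cases hm : IsCyclicNum m ∧ ∀ p, p.Prime → p ∣ m → R < p
      · rw [cyclicIndicator_eq_one hm.1 hm.2]
        exact zero_le_one
      · rw [cyclicIndicator_eq_zero hm]

lemma cyclicIndicator_le_zero (R n : ℕ) : cyclicIndicator R n ≤ cyclicIndicator 0 n := by
  by_cases hn : IsCyclicNum n ∧ ∀ p, p.Prime → p ∣ n → R < p
  · rw [cyclicIndicator_eq_one hn.1 hn.2, cyclicIndicator_eq_one hn.1 fun p hp _ ↦ hp.pos]
  · rw [cyclicIndicator_eq_zero hn]
    exact (isDivisorAntitone_cyclicIndicator 0).nonneg n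

lemma tendsto_logSummatory_cyclicIndicator (R : ℕ) :
    Tendsto (logSummatory (cyclicIndicator R)) atTop atTop := by
  have hnonneg := (isDivisorAntitone_cyclicIndicator R).nonneg
  have hdiv : ¬Summable fun n : ℕ ↦ cyclicIndicator R n / n := fun hsum ↦ by
    refine not_summable_one_div_on_primes (summable_of_isBigO_nat hsum ?_)
    refine IsBigO.of_norm_eventuallyLE ?_
    filter_upwards [eventually_gt_atTop R] with n hn
    by_cases hprime : n.Prime
    · have hR (p : ℕ) (hp : p.Prime) (hpn : p ∣ n) : R < p :=
        (Nat.prime_dvd_prime_iff_eq hp hprime).mp hpn ▸ hn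
      simp [hprime, cyclicIndicator_eq_one (isCyclicNum_of_prime hprime) hR]
    · simpa [hprime] using div_nonneg (hnonneg n) n.cast_nonneg
  have htend := ((not_summable_iff_tendsto_nat_atTop_of_nonneg
    fun n ↦ div_nonneg (hnonneg n) n.cast_nonneg).mp hdiv).comp
      ((tendsto_add_atTop_nat 1).comp (tendsto_nat_floor_atTop (α := ℝ)))
  exact htend.congr fun x ↦ sum_range_floor_add_one (by simp) x

end cyclicIndicator

/-! ### The defect of the indicator functions of cyclic numbers -/

namespace IsDivisorAntitone

variable {f : ArithmeticFunction ℝ}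

lemma sum_mul_sum_primeFactors_le (hf : IsDivisorAntitone f) {φ : ℕ → ℝ → ℝ}
    (hφ : ∀ r y, 0 ≤ φ r y) (x : ℝ) :
    ∑ m ∈ Ioc 0 ⌊x⌋₊, f m * ∑ r ∈ m.primeFactors, φ r (x / m) ≤
      ∑ m ∈ Ioc 0 ⌊x⌋₊, f m * ∑ r ∈ Ioc 0 ⌊x / m⌋₊ with r.Prime, φ r (x / m / r) := by
  let F (r m : ℕ) : ℝ := if r.Prime then f m * φ r (x / m / r) else 0
  calc _ ≤ ∑ n ∈ Ioc 0 ⌊x⌋₊, ∑ d ∈ n.divisorsAntidiagonal, F d.1 d.2 := by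
        refine Finset.sum_le_sum fun n _ ↦ ?_
        rw [Nat.sum_divisorsAntidiagonal (f := F), ← Finset.sum_filter, Finset.mul_sum,
          Nat.primeFactors_eq_to_filter_divisors_prime]
        refine Finset.sum_le_sum fun r hr ↦ ?_
        obtain ⟨hrn, hprime⟩ := Finset.mem_filter.mp hr
        obtain ⟨k, rfl⟩ := Nat.dvd_of_mem_divisors hrn
        rw [Nat.mul_div_cancel_left _ hprime.pos, Nat.cast_mul, mul_comm (r : ℝ), ← div_div]
        exact mul_le_mul_of_nonneg_right (hf.le_of_dvd (dvd_mul_left k r)) (hφ _ _)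
    _ = ∑ m ∈ Ioc 0 ⌊x⌋₊, ∑ r ∈ Ioc 0 ⌊x / m⌋₊, F r m := by
        rw [sum_divisorsAntidiagonal_eq_sum_floor_div, sum_floor_div_comm]
    _ = _ := Finset.sum_congr rfl fun m _ ↦ by rw [← Finset.sum_filter, Finset.mul_sum]

lemma sum_mul_le_of_le_linear (hf : IsDivisorAntitone f) {H : ℝ → ℝ} {ε C : ℝ} (hC : 0 ≤ C)
    (hH : ∀ z, 0 ≤ z → H z ≤ ε * z + C) {x : ℝ} (hx : 0 ≤ x) :
    ∑ m ∈ Ioc 0 ⌊x⌋₊, f m * H (x / m) ≤ ε * (x * logSummatory f x) + C * x := by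
  calc _ ≤ ∑ m ∈ Ioc 0 ⌊x⌋₊, (ε * (x * (f m / m)) + C) := Finset.sum_le_sum fun m _ ↦ by
        calc f m * H (x / m) ≤ f m * (ε * (x / m) + C) :=
              mul_le_mul_of_nonneg_left (hH _ (by positivity)) (hf.nonneg m)
          _ = ε * (x * (f m / m)) + f m * C := by ring
          _ ≤ ε * (x * (f m / m)) + C := by
              linarith [mul_le_of_le_one_left hC (hf.le_one m)]
    _ = ε * (x * logSummatory f x) + C * ⌊x⌋₊ := by
        rw [Finset.sum_add_distrib, ← Finset.mul_sum, ← Finset.mul_sum, Finset.sum_const,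
          nsmul_eq_mul, Nat.card_Ioc, Nat.sub_zero, mul_comm C]
        rfl
    _ ≤ _ := by
        gcongr
        exact Nat.floor_le hx

end IsDivisorAntitone

/-- The von Mangoldt function restricted to the primes `d ≤ R` and to the proper prime powers. -/
noncomputable def excludedVonMangoldt (R d : ℕ) : ℝ := if d.Prime ∧ R < d then 0 else Λ d

lemma excludedVonMangoldt_nonneg (R d : ℕ) : 0 ≤ excludedVonMangoldt R d := by
  rw [excludedVonMangoldt]
  split_ifs
  exacts [le_rfl, vonMangoldt_nonneg]

lemma summatory_excludedVonMangoldt_le (R : ℕ) (z : ℝ) :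
    summatory (excludedVonMangoldt R) z ≤ ψ z - θ z + ψ R := by
  have hpoint (d : ℕ) : excludedVonMangoldt R d ≤
      (Λ d - if d.Prime then log (d : ℝ) else 0) + if d ≤ R then Λ d else 0 := by
    by_cases hprime : d.Prime <;> by_cases hdR : d ≤ R <;>
      simp [excludedVonMangoldt, hprime, hdR, not_lt.mpr, lt_of_not_ge,
        ArithmeticFunction.vonMangoldt_apply_prime, vonMangoldt_nonneg]
  calc _ ≤ ∑ d ∈ Ioc 0 ⌊z⌋₊, ((Λ d - if d.Prime then log (d : ℝ) else 0) +
          if d ≤ R then Λ d else 0) := Finset.sum_le_sum fun d _ ↦ hpoint d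
    _ = ψ z - θ z + ∑ d ∈ Ioc 0 ⌊z⌋₊ with d ≤ R, Λ d := by
        rw [Finset.sum_add_distrib, Finset.sum_sub_distrib, ← Finset.sum_filter,
          ← Finset.sum_filter]
        rfl
    _ ≤ ψ z - θ z + ψ R := by
        rw [Chebyshev.psi, Chebyshev.psi, Nat.floor_natCast]
        gcongr
        intro d hd
        simp only [Finset.mem_filter, Finset.mem_Ioc] at hd ⊢
        exact ⟨hd.1.1, hd.2⟩

lemma exists_summatory_excludedVonMangoldt_le (R : ℕ) {ε : ℝ} (hε : 0 < ε) :
    ∃ C, 0 ≤ C ∧ ∀ z, 0 ≤ z → summatory (excludedVonMangoldt R) z ≤ ε * z + C := by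
  obtain ⟨K, hK⟩ := Chebyshev.psi_sub_theta_le_mul_sqrt
  refine ⟨K ^ 2 / (4 * ε) + ψ R, add_nonneg (by positivity) (Chebyshev.psi_nonneg R), fun z hz ↦ ?_⟩
  have hamgm : K * √z ≤ ε * z + K ^ 2 / (4 * ε) := by
    rw [← sub_nonneg]
    calc 0 ≤ ε * (√z - K / (2 * ε)) ^ 2 := by positivity
      _ = ε * √z ^ 2 + K ^ 2 / (4 * ε) - K * √z := by field_simp; ring
      _ = ε * z + K ^ 2 / (4 * ε) - K * √z := by rw [sq_sqrt hz]
  linarith [summatory_excludedVonMangoldt_le R z, hK z]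

lemma lowerConflictLog_add_primeOneModLog_nonneg (r d : ℕ) :
    0 ≤ lowerConflictLog r d + primeOneModLog r d :=
  add_nonneg (lowerConflictLog_nonneg r d) (primeOneModLog_nonneg r d)

lemma IsCyclicNum.log_le_sum_primeFactors {m p : ℕ} (hm : IsCyclicNum m) (hp : p.Prime)
    (hmp : ¬IsCyclicNum (m * p)) :
    log p ≤ ∑ r ∈ m.primeFactors, (lowerConflictLog r p + primeOneModLog r p) := by
  obtain ⟨r, hr, hrp⟩ : ∃ r ∈ m.primeFactors, p ∣ r * (r - 1) ∨ r ∣ p - 1 := by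
    by_contra! hnone
    exact hmp (hm.mul_prime hp hnone)
  calc log (p : ℝ) ≤ lowerConflictLog r p + primeOneModLog r p := by
        rcases hrp with hpr | hrp
        · simpa [lowerConflictLog, hp, hpr] using primeOneModLog_nonneg r p
        · simpa [primeOneModLog, hp, hrp] using lowerConflictLog_nonneg r p
    _ ≤ _ := Finset.single_le_sum (f := fun r ↦ lowerConflictLog r p + primeOneModLog r p)
        (fun r _ ↦ lowerConflictLog_add_primeOneModLog_nonneg r p) hr

lemma cyclicIndicator_sub_mul_vonMangoldt_le (R m d : ℕ) :
    (cyclicIndicator R m - cyclicIndicator R (m * d)) * Λ d ≤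
      cyclicIndicator R m * (excludedVonMangoldt R d +
        ∑ r ∈ m.primeFactors, (lowerConflictLog r d + primeOneModLog r d)) := by
  have hΛ : 0 ≤ Λ d := vonMangoldt_nonneg
  have hexcluded := excludedVonMangoldt_nonneg R d
  have hsum : 0 ≤ ∑ r ∈ m.primeFactors, (lowerConflictLog r d + primeOneModLog r d) :=
    Finset.sum_nonneg fun r _ ↦ lowerConflictLog_add_primeOneModLog_nonneg r d
  have hmd := (isDivisorAntitone_cyclicIndicator R).nonneg (m * d)
  by_cases hm : IsCyclicNum m ∧ ∀ p, p.Prime → p ∣ m → R < p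
  swap
  · rw [cyclicIndicator_eq_zero hm, zero_sub, zero_mul]
    exact mul_nonpos_of_nonpos_of_nonneg (neg_nonpos.mpr hmd) hΛ
  rw [cyclicIndicator_eq_one hm.1 hm.2, one_mul]
  have hle : (1 - cyclicIndicator R (m * d)) * Λ d ≤ Λ d := mul_le_of_le_one_left hΛ (by linarith)
  by_cases hd : d.Prime ∧ R < d
  swap
  · rw [excludedVonMangoldt, if_neg hd]
    linarith
  by_cases hcyclic : IsCyclicNum (m * d)
  · rw [cyclicIndicator_eq_one hcyclic]
    · linarith
    · intro p hp hpmd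
      rcases hp.dvd_mul.mp hpmd with hpm | hpd
      exacts [hm.2 p hp hpm, (Nat.prime_dvd_prime_iff_eq hp hd.1).mp hpd ▸ hd.2]
  · rw [ArithmeticFunction.vonMangoldt_apply_prime hd.1] at hle ⊢
    linarith [hm.1.log_le_sum_primeFactors hd.1 hcyclic]

lemma summatory_logDefect_cyclicIndicator_le (R : ℕ) (x : ℝ) :
    summatory (logDefect (cyclicIndicator R)) x ≤
      ∑ m ∈ Ioc 0 ⌊x⌋₊, cyclicIndicator R m * (summatory (excludedVonMangoldt R) (x / m) +
        ∑ r ∈ m.primeFactors,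
          (summatory (lowerConflictLog r) (x / m) + summatory (primeOneModLog r) (x / m))) := by
  simp only [summatory, logDefect_eq_sum]
  rw [sum_divisorsAntidiagonal_eq_sum_floor_div
    fun m d ↦ (cyclicIndicator R m - cyclicIndicator R (m * d)) * Λ d]
  refine Finset.sum_le_sum fun m _ ↦ (Finset.sum_le_sum fun d _ ↦
    cyclicIndicator_sub_mul_vonMangoldt_le R m d).trans_eq ?_
  rw [← Finset.mul_sum, Finset.sum_add_distrib, Finset.sum_comm]
  simp only [Finset.sum_add_distrib]

/-- The part of a sequence supported on the multiples of `r`. -/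
noncomputable def onMultiples (r : ℕ) (a : ℕ → ℝ) (n : ℕ) : ℝ := if r ∣ n then a n else 0

lemma summatory_primeOneModLog_le_linear {r : ℕ} (hr : r.Prime) {y : ℝ} (hy : 0 ≤ y) :
    summatory (primeOneModLog r) y ≤ 18 * y :=
  (summatory_primeOneModLog_le hr hy).trans <| mul_le_of_le_one_right (by positivity) <|
    div_le_one_of_le₀ (log_le_self r.cast_nonneg) r.cast_nonneg

lemma IsDivisorAntitone.sum_mul_sum_small_primeFactors_le {f : ArithmeticFunction ℝ}
    (hf : IsDivisorAntitone f) (R : ℕ) {x : ℝ} (hx : 0 ≤ x) :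
    ∑ m ∈ Ioc 0 ⌊x⌋₊, f m * ∑ r ∈ m.primeFactors with r ≤ R, summatory (primeOneModLog r) (x / m) ≤
      18 * x * ∑ r ∈ Ioc 0 R with r.Prime, logSummatory (onMultiples r f) x := by
  calc _ ≤ ∑ m ∈ Ioc 0 ⌊x⌋₊, ∑ r ∈ Ioc 0 R with r.Prime, 18 * x * (onMultiples r f m / m) := by
        refine Finset.sum_le_sum fun m _ ↦ ?_
        rw [Finset.mul_sum]
        calc _ ≤ ∑ r ∈ m.primeFactors with r ≤ R, 18 * x * (onMultiples r f m / m) := by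
              refine Finset.sum_le_sum fun r hr ↦ ?_
              obtain ⟨hprime, hdvd, -⟩ := Nat.mem_primeFactors.mp (Finset.mem_filter.mp hr).1
              rw [onMultiples, if_pos hdvd]
              exact (mul_le_mul_of_nonneg_left (summatory_primeOneModLog_le_linear hprime
                (by positivity)) (hf.nonneg m)).trans_eq (by ring)
          _ ≤ _ := by
              refine Finset.sum_le_sum_of_subset_of_nonneg (fun r hr ↦ ?_) fun r _ _ ↦ ?_
              · simp only [Finset.mem_filter, Finset.mem_Ioc, Nat.mem_primeFactors] at hr ⊢
                exact ⟨⟨hr.1.1.pos, hr.2⟩, hr.1.1⟩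
              · have := hf.nonneg m
                unfold onMultiples
                positivity
    _ = _ := by
        rw [Finset.sum_comm, Finset.mul_sum]
        simp only [logSummatory, summatory, Finset.mul_sum]

lemma exists_sum_mul_sum_primeOneModLog_le {ε : ℝ} (hε : 0 < ε) :
    ∃ R : ℕ, ∀ f, IsDivisorAntitone f → ∀ x, 0 ≤ x →
      ∑ m ∈ Ioc 0 ⌊x⌋₊, f m * ∑ r ∈ m.primeFactors, summatory (primeOneModLog r) (x / m) ≤
        ε * (x * logSummatory f x) +
          18 * x * ∑ r ∈ Ioc 0 R with r.Prime, logSummatory (onMultiples r f) x := by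
  obtain ⟨R, hR⟩ := exists_sum_summatory_primeOneModLog_le hε
  refine ⟨R, fun f hf x hx ↦ ?_⟩
  let φ (r : ℕ) (y : ℝ) : ℝ := if R < r then summatory (primeOneModLog r) y else 0
  have hφ (r : ℕ) (y : ℝ) : 0 ≤ φ r y :=
    ite_nonneg (summatory_nonneg (primeOneModLog_nonneg r) y) le_rfl
  have hφsum (z : ℝ) (hz : 0 ≤ z) :
      ∑ r ∈ Ioc 0 ⌊z⌋₊ with r.Prime, φ r (z / r) ≤ ε * z + 0 := by
    rw [add_zero, ← Finset.sum_filter]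
    refine (Finset.sum_le_sum_of_subset_of_nonneg (fun r hr ↦ ?_) fun r _ _ ↦
      summatory_nonneg (primeOneModLog_nonneg r) _).trans (hR z hz)
    simp only [Finset.mem_filter, Finset.mem_Ioc] at hr ⊢
    exact ⟨⟨hr.2, hr.1.1.2⟩, hr.1.2⟩
  have hlarge := (hf.sum_mul_sum_primeFactors_le hφ x).trans
    (hf.sum_mul_le_of_le_linear le_rfl hφsum hx)
  have hsplit (m : ℕ) : ∑ r ∈ m.primeFactors, summatory (primeOneModLog r) (x / m) =
      ∑ r ∈ m.primeFactors, φ r (x / m) +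
        ∑ r ∈ m.primeFactors with r ≤ R, summatory (primeOneModLog r) (x / m) := by
    rw [← Finset.sum_filter, ← Finset.sum_filter_add_sum_filter_not _ (R < ·)]
    simp only [not_lt]
  simp only [hsplit, mul_add, Finset.sum_add_distrib]
  linarith [hf.sum_mul_sum_small_primeFactors_le R hx]

theorem exists_eventually_summatory_logDefect_cyclicIndicator_le {ε : ℝ} (hε : 0 < ε) :
    ∃ R₀ : ℕ, ∀ R, ∀ᶠ x in atTop, summatory (logDefect (cyclicIndicator R)) x ≤
      ε * (x * logSummatory (cyclicIndicator R) x) +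
        18 * x * ∑ r ∈ Ioc 0 R₀ with r.Prime,
          logSummatory (onMultiples r (cyclicIndicator R)) x := by
  have hε4 : 0 < ε / 4 := by positivity
  obtain ⟨R₀, hupper⟩ := exists_sum_mul_sum_primeOneModLog_le hε4
  obtain ⟨C₁, hC₁, hlower⟩ := exists_sum_summatory_lowerConflictLog_le hε4
  refine ⟨R₀, fun R ↦ ?_⟩
  obtain ⟨C₂, hC₂, hexcluded⟩ := exists_summatory_excludedVonMangoldt_le R hε4
  have hf := isDivisorAntitone_cyclicIndicator R
  filter_upwards [eventually_ge_atTop 0,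
    (tendsto_logSummatory_cyclicIndicator R).eventually_ge_atTop (4 * (C₁ + C₂) / ε)] with x hx hD
  have hconst : (C₁ + C₂) * x ≤ ε / 4 * (x * logSummatory (cyclicIndicator R) x) := by
    rw [div_le_iff₀ hε] at hD
    nlinarith
  have hsum := summatory_logDefect_cyclicIndicator_le R x
  simp only [mul_add, Finset.sum_add_distrib] at hsum
  linarith [hf.sum_mul_le_of_le_linear hC₂ hexcluded hx, hupper _ hf x hx,
    (hf.sum_mul_sum_primeFactors_le
      (fun r ↦ summatory_nonneg (lowerConflictLog_nonneg r)) x).trans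
      (hf.sum_mul_le_of_le_linear hC₁ hlower hx)]

lemma onMultiples_cyclicIndicator_eq_zero {r R : ℕ} (hr : r.Prime) (hrR : r ≤ R) (n : ℕ) :
    onMultiples r (cyclicIndicator R) n = 0 := by
  rw [onMultiples]
  split_ifs with hrn
  exacts [cyclicIndicator_eq_zero fun h ↦ (h.2 r hr hrn).not_ge hrR, rfl]

lemma exists_eventually_summatory_logDefect_le {ε : ℝ} (hε : 0 < ε) :
    ∃ R, ∀ᶠ x in atTop, summatory (logDefect (cyclicIndicator R)) x ≤
      ε * (x * logSummatory (cyclicIndicator R) x) := by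
  obtain ⟨R, hR⟩ := exists_eventually_summatory_logDefect_cyclicIndicator_le hε
  refine ⟨R, (hR R).mono fun x hx ↦ hx.trans_eq ?_⟩
  rw [Finset.sum_eq_zero, mul_zero, add_zero]
  intro r hr
  obtain ⟨hrR, hprime⟩ := Finset.mem_filter.mp hr
  simp [logSummatory, summatory,
    onMultiples_cyclicIndicator_eq_zero hprime (Finset.mem_Ioc.mp hrR).2]

theorem rpow_log_isBigO_logSummatory_cyclicIndicator {α : ℝ} (hα : 0 ≤ α) (hα1 : α < 1) :
    (fun x ↦ log x ^ α) =O[atTop] logSummatory (cyclicIndicator 0) := by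
  obtain ⟨ε, hε, hαε⟩ : ∃ ε > 0, (1 + α) * (1 + 3 * ε) < 2 :=
    ⟨(1 - α) / 12, by linarith, by nlinarith⟩
  obtain ⟨R, hR⟩ := exists_eventually_summatory_logDefect_le hε
  have hf := isDivisorAntitone_cyclicIndicator R
  have hlogDefect := eventually_logSummatory_le hf.logDefect_nonneg (logSummatory_mono hf.nonneg)
    ((tendsto_logSummatory_cyclicIndicator R).eventually_ge_atTop 1) hε hR
  refine (hf.rpow_log_isBigO_logSummatory (by positivity) hα hαε hlogDefect).trans
    (.of_norm_le fun x ↦ ?_)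
  rw [norm_of_nonneg (logSummatory_nonneg hf.nonneg x)]
  simp only [logSummatory, summatory]
  gcongr with n
  exact cyclicIndicator_le_zero R n

/-! ### Real Dirichlet series -/

/-- The Dirichlet series `∑ a n / n ^ s` at a real point `s`; the term at `n = 0` vanishes for
`s ≠ 0`. -/
noncomputable def dirichletSeries (a : ℕ → ℝ) (s : ℝ) : ℝ := ∑' n : ℕ, a n / (n : ℝ) ^ s

section dirichletSeries

variable {a b c : ℕ → ℝ} {s : ℝ}

lemma summable_log_div_rpow (hs : 1 < s) : Summable fun n : ℕ ↦ log n / (n : ℝ) ^ s := by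
  refine summable_of_isBigO_nat (Real.summable_one_div_nat_rpow.mpr (by linarith : 1 < (1 + s) / 2))
    (IsLittleO.isBigO ?_)
  have hlog := (isLittleO_log_rpow_atTop (by linarith : 0 < (s - 1) / 2)).comp_tendsto
    tendsto_natCast_atTop_atTop
  refine (hlog.mul_isBigO (isBigO_refl (fun n : ℕ ↦ ((n : ℝ) ^ s)⁻¹) atTop)).congr'
    (.of_forall fun n ↦ (div_eq_mul_inv _ _).symm) ?_
  filter_upwards [eventually_gt_atTop 0] with n hn
  have hn' : (0 : ℝ) < n := by exact_mod_cast hn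
  rw [Function.comp_apply, ← rpow_neg hn'.le, ← rpow_add hn', one_div, ← rpow_neg hn'.le]
  ring_nf

lemma summable_div_rpow_of_le (ha : ∀ n, 0 ≤ a n) (hab : ∀ n, a n ≤ b n)
    (hb : Summable fun n : ℕ ↦ b n / (n : ℝ) ^ s) : Summable fun n : ℕ ↦ a n / (n : ℝ) ^ s :=
  hb.of_nonneg_of_le (fun n ↦ div_nonneg (ha n) (by positivity)) fun n ↦ by gcongr; exact hab n

lemma summable_div_rpow_of_le_one (ha : ∀ n, 0 ≤ a n) (ha1 : ∀ n, a n ≤ 1) (hs : 1 < s) :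
    Summable fun n : ℕ ↦ a n / (n : ℝ) ^ s :=
  summable_div_rpow_of_le ha ha1 (Real.summable_one_div_nat_rpow.mpr hs)

lemma summable_mul_log_div_rpow (ha : ∀ n, 0 ≤ a n) (ha1 : ∀ n, a n ≤ 1) (hs : 1 < s) :
    Summable fun n : ℕ ↦ a n * log n / (n : ℝ) ^ s :=
  summable_div_rpow_of_le (fun n ↦ mul_nonneg (ha n) (log_natCast_nonneg n))
    (fun n ↦ mul_le_of_le_one_left (log_natCast_nonneg n) (ha1 n)) (summable_log_div_rpow hs)

lemma sum_divisorsAntidiagonal_div_rpow (n : ℕ) :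
    ∑ d ∈ n.divisorsAntidiagonal, a d.1 / (d.1 : ℝ) ^ s * (b d.2 / (d.2 : ℝ) ^ s) =
      (∑ d ∈ n.divisorsAntidiagonal, a d.1 * b d.2) / (n : ℝ) ^ s := by
  rw [Finset.sum_div]
  refine Finset.sum_congr rfl fun d hd ↦ ?_
  rw [← (Nat.mem_divisorsAntidiagonal.mp hd).1, Nat.cast_mul,
    mul_rpow d.1.cast_nonneg d.2.cast_nonneg, div_mul_div_comm]

lemma dirichletSeries_mul_le (hs : s ≠ 0) (ha : ∀ n, 0 ≤ a n) (hb : ∀ n, 0 ≤ b n)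
    (hc : ∀ n, 0 ≤ c n) (hsa : Summable fun n : ℕ ↦ a n / (n : ℝ) ^ s)
    (hsb : Summable fun n : ℕ ↦ b n / (n : ℝ) ^ s)
    (hsc : Summable fun n : ℕ ↦ c n / (n : ℝ) ^ s)
    (hconv : ∀ n ≠ 0, ∑ d ∈ n.divisorsAntidiagonal, a d.1 * b d.2 ≤ c n) :
    dirichletSeries a s * dirichletSeries b s ≤ dirichletSeries c s := by
  let F (d : ℕ × ℕ) : ℝ := a d.1 / (d.1 : ℝ) ^ s * (b d.2 / (d.2 : ℝ) ^ s)
  have hF (d : ℕ × ℕ) : 0 ≤ F d :=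
    mul_nonneg (div_nonneg (ha _) (by positivity)) (div_nonneg (hb _) (by positivity))
  have hfiber (S : Finset (ℕ × ℕ)) (n : ℕ) :
      ∑ d ∈ S with d.1 * d.2 = n, F d ≤ c n / (n : ℝ) ^ s := by
    rcases eq_or_ne n 0 with rfl | hn
    · refine (Finset.sum_eq_zero fun d hd ↦ ?_).trans_le (div_nonneg (hc 0) (by positivity))
      rcases Nat.mul_eq_zero.mp (Finset.mem_filter.mp hd).2 with h | h <;>
        simp [F, h, zero_rpow hs]
    · calc _ ≤ ∑ d ∈ n.divisorsAntidiagonal, F d :=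
            Finset.sum_le_sum_of_subset_of_nonneg (fun d hd ↦ Nat.mem_divisorsAntidiagonal.mpr
              ⟨(Finset.mem_filter.mp hd).2, hn⟩) fun d _ _ ↦ hF d
        _ ≤ _ := by
            rw [sum_divisorsAntidiagonal_div_rpow]
            gcongr
            exact hconv n hn
  simp only [dirichletSeries]
  rw [tsum_mul_tsum_of_summable_norm hsa.norm hsb.norm]
  refine Real.tsum_le_of_sum_le hF fun S ↦ ?_
  calc ∑ d ∈ S, F d
      = ∑ n ∈ S.image fun d ↦ d.1 * d.2, ∑ d ∈ S with d.1 * d.2 = n, F d :=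
        (Finset.sum_fiberwise_of_maps_to (fun d hd ↦ Finset.mem_image_of_mem _ hd) _).symm
    _ ≤ ∑ n ∈ S.image fun d ↦ d.1 * d.2, c n / (n : ℝ) ^ s :=
        Finset.sum_le_sum fun n _ ↦ hfiber S n
    _ ≤ _ := hsc.sum_le_tsum _ fun n _ ↦ div_nonneg (hc n) (by positivity)

lemma dirichletSeries_add_mul_log_le (ha : ∀ n, 0 ≤ a n) (ha1 : ∀ n, a n ≤ 1) (hs : 1 < s)
    {δ : ℝ} (hδ : 0 ≤ δ) :
    dirichletSeries a (s + δ) + δ * dirichletSeries (fun n ↦ a n * log n) (s + δ) ≤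
      dirichletSeries a s := by
  have hsδ : 1 < s + δ := by linarith
  have hsum := summable_div_rpow_of_le_one ha ha1 hsδ
  have hsum_log := (summable_mul_log_div_rpow ha ha1 hsδ).mul_left δ
  simp only [dirichletSeries]
  rw [← tsum_mul_left, ← hsum.tsum_add hsum_log]
  refine (hsum.add hsum_log).tsum_le_tsum (fun n ↦ ?_) (summable_div_rpow_of_le_one ha ha1 hs)
  rcases n.eq_zero_or_pos with rfl | hn
  · simp [zero_rpow (by linarith : s ≠ 0), zero_rpow (by linarith : s + δ ≠ 0)]
  have hn' : (0 : ℝ) < n := by exact_mod_cast hn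
  have hexp : 1 + δ * log n ≤ (n : ℝ) ^ δ := by
    rw [rpow_def_of_pos hn', mul_comm, add_comm]
    exact add_one_le_exp _
  calc _ = a n * (1 + δ * log n) / ((n : ℝ) ^ s * (n : ℝ) ^ δ) := by rw [rpow_add hn']; ring
    _ ≤ a n * (n : ℝ) ^ δ / ((n : ℝ) ^ s * (n : ℝ) ^ δ) := by gcongr; exact ha n
    _ = a n / (n : ℝ) ^ s := by field_simp

lemma one_le_dirichletSeries (ha : ∀ n, 0 ≤ a n) (ha1 : ∀ n, a n ≤ 1) (h1 : a 1 = 1)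
    (hs : 1 < s) : 1 ≤ dirichletSeries a s := by
  simpa [h1, dirichletSeries] using (summable_div_rpow_of_le_one ha ha1 hs).le_tsum 1
    fun n _ ↦ div_nonneg (ha n) (by positivity)

lemma logSummatory_le_exp_one_mul_dirichletSeries (ha : ∀ n, 0 ≤ a n) (ha1 : ∀ n, a n ≤ 1) {x : ℝ}
    (hx : 1 < x) : logSummatory a x ≤ exp 1 * dirichletSeries a (1 + (log x)⁻¹) := by
  have hlog : 0 < log x := log_pos hx
  have hsum : Summable fun n : ℕ ↦ a n / (n : ℝ) ^ (1 + (log x)⁻¹) :=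
    summable_div_rpow_of_le_one ha ha1 (by linarith [inv_pos.mpr hlog])
  refine le_trans ?_ (mul_le_mul_of_nonneg_left (hsum.sum_le_tsum (Ioc 0 ⌊x⌋₊)
    fun n _ ↦ div_nonneg (ha n) (by positivity)) (exp_pos 1).le)
  rw [logSummatory, summatory, Finset.mul_sum]
  refine Finset.sum_le_sum fun n hn ↦ ?_
  have hn' : (0 : ℝ) < n := by exact_mod_cast (Finset.mem_Ioc.mp hn).1
  have hrpow : (n : ℝ) ^ (log x)⁻¹ ≤ exp 1 := by
    rw [rpow_def_of_pos hn', exp_le_exp, ← div_eq_mul_inv, div_le_one hlog]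
    linarith [log_div_nonneg_of_mem_Ioc_floor hn, log_div_of_mem_Ioc_floor hn]
  rw [rpow_add hn', rpow_one, ← div_div, mul_div_assoc', le_div_iff₀ (by positivity), mul_comm]
  gcongr
  exact div_nonneg (ha n) hn'.le

end dirichletSeries

/-! ### Integers composed of primes congruent to 1 -/

/-- The positive integers all of whose prime factors are `≡ 1 (mod r)`. -/
def PrimeFactorsOneMod (r n : ℕ) : Prop := n ≠ 0 ∧ ∀ p ∈ n.primeFactors, r ∣ p - 1

instance (r : ℕ) : DecidablePred (PrimeFactorsOneMod r) := fun n ↦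
  inferInstanceAs (Decidable (n ≠ 0 ∧ ∀ p ∈ n.primeFactors, r ∣ p - 1))

/-- The indicator function of `PrimeFactorsOneMod r`. -/
def oneModIndicator (r n : ℕ) : ℝ := if PrimeFactorsOneMod r n then 1 else 0

lemma PrimeFactorsOneMod.prime_mul {r p n : ℕ} (hp : p.Prime) (hpr : r ∣ p - 1)
    (hn : PrimeFactorsOneMod r n) : PrimeFactorsOneMod r (p * n) := by
  refine ⟨mul_ne_zero hp.ne_zero hn.1, fun q hq ↦ ?_⟩
  rw [Nat.primeFactors_mul hp.ne_zero hn.1, hp.primeFactors, Finset.singleton_union,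
    Finset.mem_insert] at hq
  exact hq.elim (fun h ↦ h ▸ hpr) (hn.2 q)

section oneModIndicator

variable {r : ℕ}

lemma oneModIndicator_nonneg (n : ℕ) : 0 ≤ oneModIndicator r n := by
  rw [oneModIndicator]
  split_ifs <;> norm_num

lemma oneModIndicator_le_one (n : ℕ) : oneModIndicator r n ≤ 1 := by
  rw [oneModIndicator]
  split_ifs <;> norm_num

lemma one_le_dirichletSeries_oneModIndicator {s : ℝ} (hs : 1 < s) :
    1 ≤ dirichletSeries (oneModIndicator r) s :=
  one_le_dirichletSeries oneModIndicator_nonneg oneModIndicator_le_one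
    (if_pos ⟨one_ne_zero, by simp⟩) hs

lemma summable_primeOneModLog_div_rpow {s : ℝ} (hs : 1 < s) :
    Summable fun n : ℕ ↦ primeOneModLog r n / (n : ℝ) ^ s :=
  summable_div_rpow_of_le (primeOneModLog_nonneg r) (fun n ↦
    (primeOneModLog_le_vonMangoldt r n).trans ArithmeticFunction.vonMangoldt_le_log)
    (summable_log_div_rpow hs)

lemma sum_primeOneModLog_mul_oneModIndicator_le (n : ℕ) :
    ∑ d ∈ n.divisorsAntidiagonal, primeOneModLog r d.1 * oneModIndicator r d.2 ≤
      oneModIndicator r n * log n := by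
  rw [← sum_divisorsAntidiagonal_vonMangoldt_fst, Finset.mul_sum]
  refine Finset.sum_le_sum fun d hd ↦ ?_
  have hnonneg : 0 ≤ oneModIndicator r n * Λ d.1 :=
    mul_nonneg (oneModIndicator_nonneg n) vonMangoldt_nonneg
  by_cases hp : d.1.Prime ∧ r ∣ d.1 - 1
  · by_cases hm : PrimeFactorsOneMod r d.2
    · have hn : PrimeFactorsOneMod r n :=
        (Nat.mem_divisorsAntidiagonal.mp hd).1 ▸ hm.prime_mul hp.1 hp.2
      rw [oneModIndicator, oneModIndicator, if_pos hm, if_pos hn, mul_one, one_mul]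
      exact primeOneModLog_le_vonMangoldt r d.1
    · simpa [oneModIndicator, hm] using hnonneg
  · simpa [primeOneModLog, hp] using hnonneg

lemma dirichletSeries_oneModIndicator_mul_le {s δ : ℝ} (hs : 1 < s) (hδ : 0 ≤ δ) :
    (1 + δ * dirichletSeries (primeOneModLog r) (s + δ)) *
      dirichletSeries (oneModIndicator r) (s + δ) ≤ dirichletSeries (oneModIndicator r) s := by
  have hsδ : 1 < s + δ := by linarith
  have hmul : dirichletSeries (primeOneModLog r) (s + δ) *
      dirichletSeries (oneModIndicator r) (s + δ) ≤
        dirichletSeries (fun n ↦ oneModIndicator r n * log n) (s + δ) :=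
    dirichletSeries_mul_le (by linarith) (primeOneModLog_nonneg r) oneModIndicator_nonneg
      (fun n ↦ mul_nonneg (oneModIndicator_nonneg n) (log_natCast_nonneg n))
      (summable_primeOneModLog_div_rpow hsδ)
      (summable_div_rpow_of_le_one oneModIndicator_nonneg oneModIndicator_le_one hsδ)
      (summable_mul_log_div_rpow oneModIndicator_nonneg oneModIndicator_le_one hsδ)
      fun n _ ↦ sum_primeOneModLog_mul_oneModIndicator_le n
  calc _ = dirichletSeries (oneModIndicator r) (s + δ) +
        δ * (dirichletSeries (primeOneModLog r) (s + δ) *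
          dirichletSeries (oneModIndicator r) (s + δ)) := by ring
    _ ≤ _ := by gcongr
    _ ≤ _ := dirichletSeries_add_mul_log_le oneModIndicator_nonneg oneModIndicator_le_one hs hδ

open ArithmeticFunction.vonMangoldt (residueClass residueClass_nonneg residueClass_le
  LSeries_residueClass_lower_bound summable_residueClass_non_primes_div)

lemma residueClass_one_le_primeOneModLog {p : ℕ} (hp : p.Prime) :
    residueClass (1 : ZMod r) p ≤ primeOneModLog r p := by
  by_cases hpr : (p : ZMod r) = 1
  · have hdvd : r ∣ p - 1 := by
      rw [← ZMod.natCast_eq_zero_iff, Nat.cast_sub hp.one_le, hpr, Nat.cast_one, sub_self]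
    rw [primeOneModLog, if_pos ⟨hp, hdvd⟩, ← ArithmeticFunction.vonMangoldt_apply_prime hp]
    exact residueClass_le _ p
  · rw [residueClass, Set.indicator_of_notMem (by simpa using hpr)]
    exact primeOneModLog_nonneg r p

lemma residueClass_one_div_rpow_le {s : ℝ} (hs : 1 ≤ s) (n : ℕ) :
    residueClass (1 : ZMod r) n / (n : ℝ) ^ s ≤ primeOneModLog r n / (n : ℝ) ^ s +
      (if n.Prime then 0 else residueClass (1 : ZMod r) n) / n := by
  rcases n.eq_zero_or_pos with rfl | hn
  · simp [primeOneModLog]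
  split_ifs with hprime
  · rw [zero_div, add_zero]
    gcongr
    exact residueClass_one_le_primeOneModLog hprime
  · have hn' : (1 : ℝ) ≤ n := by exact_mod_cast hn
    have hle : residueClass (1 : ZMod r) n / (n : ℝ) ^ s ≤ residueClass (1 : ZMod r) n / n := by
      gcongr
      exacts [residueClass_nonneg 1 n, self_le_rpow_of_one_le hn' hs]
    linarith [div_nonneg (primeOneModLog_nonneg r n) (by positivity : 0 ≤ (n : ℝ) ^ s)]

lemma exists_le_dirichletSeries_primeOneModLog [NeZero r] :
    ∃ C, ∀ s ∈ Set.Ioc 1 2,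
      (r.totient : ℝ)⁻¹ / (s - 1) - C ≤ dirichletSeries (primeOneModLog r) s := by
  obtain ⟨C, hC⟩ := LSeries_residueClass_lower_bound (q := r) (a := 1) isUnit_one
  have hpowers := summable_residueClass_non_primes_div (q := r) (a := 1)
  refine ⟨C + ∑' n : ℕ, (if n.Prime then 0 else residueClass (1 : ZMod r) n) / n, fun s hs ↦ ?_⟩
  have hsum := (summable_primeOneModLog_div_rpow (r := r) hs.1).add hpowers
  have hle := (hsum.of_nonneg_of_le
    (fun n ↦ div_nonneg (residueClass_nonneg _ n) (by positivity))
    (residueClass_one_div_rpow_le hs.1.le)).tsum_le_tsum (residueClass_one_div_rpow_le hs.1.le) hsum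
  rw [(summable_primeOneModLog_div_rpow hs.1).tsum_add hpowers] at hle
  rw [dirichletSeries]
  linarith [hC hs]

lemma exists_rpow_mul_dirichletSeries_oneModIndicator_le [NeZero r] :
    ∃ κ > (0 : ℝ), ∃ t₀ ≥ 1, ∀ t, t₀ ≤ t →
      (2 : ℝ) ^ κ * dirichletSeries (oneModIndicator r) (1 + t⁻¹) ≤
        dirichletSeries (oneModIndicator r) (1 + (2 * t)⁻¹) := by
  obtain ⟨C, hC⟩ := exists_le_dirichletSeries_primeOneModLog (r := r)
  set c : ℝ := (r.totient : ℝ)⁻¹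
  have hc : 0 < c := inv_pos.mpr (by exact_mod_cast Nat.totient_pos.mpr (NeZero.pos r))
  refine ⟨logb 2 (1 + c / 4), logb_pos one_lt_two (by linarith), max 1 (2 * C / c),
    le_max_left _ _, fun t ht ↦ ?_⟩
  have ht1 : 1 ≤ t := (le_max_left _ _).trans ht
  have htC : 2 * C ≤ t * c := (div_le_iff₀ hc).mp ((le_max_right _ _).trans ht)
  have hs : 1 < 1 + t⁻¹ := lt_add_of_pos_right 1 (by positivity)
  have hprimes : c / 4 ≤ (2 * t)⁻¹ * dirichletSeries (primeOneModLog r) (1 + t⁻¹) := by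
    have hlower := hC (1 + t⁻¹) ⟨hs, by linarith [inv_le_one_of_one_le₀ ht1]⟩
    rw [add_sub_cancel_left, div_inv_eq_mul] at hlower
    rw [inv_mul_eq_div, le_div_iff₀ (by positivity)]
    linarith
  have hstep := dirichletSeries_oneModIndicator_mul_le (r := r)
    (lt_add_of_pos_right 1 (by positivity : 0 < (2 * t)⁻¹)) (by positivity : 0 ≤ (2 * t)⁻¹)
  rw [show 1 + (2 * t)⁻¹ + (2 * t)⁻¹ = 1 + t⁻¹ by field_simp; ring] at hstep
  rw [rpow_logb two_pos one_lt_two.ne' (by linarith)]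
  refine le_trans ?_ hstep
  gcongr
  exact zero_le_one.trans (one_le_dirichletSeries_oneModIndicator hs)

lemma exists_mul_rpow_le_dirichletSeries_oneModIndicator [NeZero r] :
    ∃ κ > (0 : ℝ), ∃ K > 0, ∃ t₀, ∀ t, t₀ ≤ t →
      K * t ^ κ ≤ dirichletSeries (oneModIndicator r) (1 + t⁻¹) := by
  obtain ⟨κ, hκ, t₀, ht₀, hscale⟩ := exists_rpow_mul_dirichletSeries_oneModIndicator_le (r := r)
  have hone (t : ℝ) (ht : t₀ ≤ t) : 1 ≤ dirichletSeries (oneModIndicator r) (1 + t⁻¹) :=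
    one_le_dirichletSeries_oneModIndicator
      (lt_add_of_pos_right 1 (inv_pos.mpr (one_pos.trans_le (ht₀.trans ht))))
  obtain ⟨K, hK, hle⟩ := exists_mul_rpow_le_of_rpow_mul_le one_pos (one_pos.trans_le ht₀)
    one_lt_two hκ.le hone hscale
  exact ⟨κ, hκ, K, hK, t₀, hle⟩

end oneModIndicator

/-! ### Cyclic multiples of a fixed prime -/

lemma onMultiples_nonneg {a : ℕ → ℝ} (ha : ∀ n, 0 ≤ a n) (r n : ℕ) : 0 ≤ onMultiples r a n := by
  rw [onMultiples]
  split_ifs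
  exacts [ha n, le_rfl]

lemma onMultiples_le {a : ℕ → ℝ} (ha : ∀ n, 0 ≤ a n) (r n : ℕ) : onMultiples r a n ≤ a n := by
  rw [onMultiples]
  split_ifs
  exacts [le_rfl, ha n]

lemma IsCyclicNum.coprime_of_primeFactorsOneMod {r m n : ℕ} (hr : r.Prime) (hm : IsCyclicNum m)
    (hrm : r ∣ m) (hn : PrimeFactorsOneMod r n) : m.Coprime n :=
  Nat.coprime_of_dvd fun p hp hpm hpn ↦ hm.not_dvd_sub_one hr hrm hp hpm
    (hn.2 p (Nat.mem_primeFactors.mpr ⟨hp, hpn, hn.1⟩))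

lemma eq_of_mul_eq_mul_of_isCyclicNum {r m n m' n' : ℕ} (hr : r.Prime)
    (hm : IsCyclicNum m) (hrm : r ∣ m) (hn : PrimeFactorsOneMod r n)
    (hm' : IsCyclicNum m') (hrm' : r ∣ m') (hn' : PrimeFactorsOneMod r n')
    (h : m * n = m' * n') : m = m' ∧ n = n' := by
  have hmm' : m = m' := Nat.dvd_antisymm
    ((hm.coprime_of_primeFactorsOneMod hr hrm hn').dvd_of_dvd_mul_right (h ▸ dvd_mul_right m n))
    ((hm'.coprime_of_primeFactorsOneMod hr hrm' hn).dvd_of_dvd_mul_right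
      (h ▸ dvd_mul_right m' n'))
  subst hmm'
  exact ⟨rfl, Nat.eq_of_mul_eq_mul_left hm.1 h⟩

lemma sum_onMultiples_cyclicIndicator_mul_oneModIndicator_le_one {r : ℕ} (hr : r.Prime) (n : ℕ) :
    ∑ d ∈ n.divisorsAntidiagonal,
      onMultiples r (cyclicIndicator 0) d.1 * oneModIndicator r d.2 ≤ 1 := by
  have hterm (d : ℕ × ℕ) : onMultiples r (cyclicIndicator 0) d.1 * oneModIndicator r d.2 =
      if (IsCyclicNum d.1 ∧ r ∣ d.1) ∧ PrimeFactorsOneMod r d.2 then 1 else 0 := by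
    rw [onMultiples, cyclicIndicator_zero_apply, oneModIndicator]
    split_ifs <;> simp_all
  simp only [hterm]
  rw [Finset.sum_boole]
  norm_cast
  refine Finset.card_le_one.mpr fun d hd e he ↦ ?_
  obtain ⟨hdn, ⟨hd_cyc, hrd⟩, hd_mod⟩ := Finset.mem_filter.mp hd
  obtain ⟨hen, ⟨he_cyc, hre⟩, he_mod⟩ := Finset.mem_filter.mp he
  have hmul : d.1 * d.2 = e.1 * e.2 := (Nat.mem_divisorsAntidiagonal.mp hdn).1.trans
    (Nat.mem_divisorsAntidiagonal.mp hen).1.symm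
  exact Prod.ext_iff.mpr
    (eq_of_mul_eq_mul_of_isCyclicNum hr hd_cyc hrd hd_mod he_cyc hre he_mod hmul)

lemma onMultiples_cyclicIndicator_nonneg (r n : ℕ) : 0 ≤ onMultiples r (cyclicIndicator 0) n :=
  onMultiples_nonneg (isDivisorAntitone_cyclicIndicator 0).nonneg r n

lemma onMultiples_cyclicIndicator_le_one (r n : ℕ) : onMultiples r (cyclicIndicator 0) n ≤ 1 :=
  (onMultiples_le (isDivisorAntitone_cyclicIndicator 0).nonneg r n).trans
    ((isDivisorAntitone_cyclicIndicator 0).le_one n)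

lemma dirichletSeries_onMultiples_cyclicIndicator_mul_le {r : ℕ} (hr : r.Prime) {s : ℝ}
    (hs : 1 < s) :
    dirichletSeries (onMultiples r (cyclicIndicator 0)) s * dirichletSeries (oneModIndicator r) s ≤
      ∑' n : ℕ, 1 / (n : ℝ) ^ s :=
  dirichletSeries_mul_le (c := fun _ ↦ 1) (by linarith) (onMultiples_cyclicIndicator_nonneg r)
    oneModIndicator_nonneg (fun _ ↦ zero_le_one)
    (summable_div_rpow_of_le_one (onMultiples_cyclicIndicator_nonneg r)
      (onMultiples_cyclicIndicator_le_one r) hs)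
    (summable_div_rpow_of_le_one oneModIndicator_nonneg oneModIndicator_le_one hs)
    (Real.summable_one_div_nat_rpow.mpr hs)
    fun n _ ↦ sum_onMultiples_cyclicIndicator_mul_oneModIndicator_le_one hr n

lemma tendsto_tsum_one_div_rpow_div_log :
    Tendsto (fun x ↦ (log x)⁻¹ * ∑' n : ℕ, 1 / (n : ℝ) ^ (1 + (log x)⁻¹)) atTop (𝓝 1) := by
  have hexponent : Tendsto (fun x ↦ 1 + (log x)⁻¹) atTop (𝓝[>] 1) := by
    refine tendsto_nhdsWithin_iff.mpr ⟨?_, ?_⟩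
    · simpa using (tendsto_inv_atTop_zero.comp tendsto_log_atTop).const_add 1
    · filter_upwards [eventually_gt_atTop 1] with x hx
      exact lt_add_of_pos_right 1 (inv_pos.mpr (log_pos hx))
  simpa [Function.comp_def] using tendsto_sub_mul_tsum_nat_rpow.comp hexponent

lemma logSummatory_onMultiples_cyclicIndicator_isBigO {r : ℕ} (hr : r.Prime) :
    ∃ κ > (0 : ℝ), logSummatory (onMultiples r (cyclicIndicator 0)) =O[atTop]
      fun x ↦ log x ^ (1 - κ) := by
  have : NeZero r := ⟨hr.ne_zero⟩
  obtain ⟨κ, hκ, K, hK, t₀, hgrowth⟩ :=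
    exists_mul_rpow_le_dirichletSeries_oneModIndicator (r := r)
  refine ⟨κ, hκ, IsBigO.of_bound (2 * exp 1 / K) ?_⟩
  filter_upwards [eventually_gt_atTop 1, tendsto_log_atTop.eventually_ge_atTop t₀,
    tendsto_tsum_one_div_rpow_div_log.eventually_le_const one_lt_two] with x hx hxt₀ hzeta
  have hlog : 0 < log x := log_pos hx
  have hs : 1 < 1 + (log x)⁻¹ := lt_add_of_pos_right 1 (inv_pos.mpr hlog)
  have hE : 0 ≤ logSummatory (onMultiples r (cyclicIndicator 0)) x :=
    logSummatory_nonneg (onMultiples_cyclicIndicator_nonneg r) x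
  have hH : 0 ≤ dirichletSeries (oneModIndicator r) (1 + (log x)⁻¹) :=
    zero_le_one.trans (one_le_dirichletSeries_oneModIndicator hs)
  rw [inv_mul_le_iff₀ hlog] at hzeta
  rw [norm_of_nonneg hE, norm_of_nonneg (by positivity), rpow_sub hlog, rpow_one,
    div_mul_div_comm, le_div_iff₀ (by positivity)]
  calc _ ≤ logSummatory (onMultiples r (cyclicIndicator 0)) x *
        dirichletSeries (oneModIndicator r) (1 + (log x)⁻¹) := by gcongr; exact hgrowth _ hxt₀
    _ ≤ exp 1 * dirichletSeries (onMultiples r (cyclicIndicator 0)) (1 + (log x)⁻¹) *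
        dirichletSeries (oneModIndicator r) (1 + (log x)⁻¹) := by
      gcongr
      exact logSummatory_le_exp_one_mul_dirichletSeries (onMultiples_cyclicIndicator_nonneg r)
        (onMultiples_cyclicIndicator_le_one r) hx
    _ ≤ exp 1 * (log x * 2) := by
      rw [mul_assoc]
      gcongr exp 1 * ?_
      exact (dirichletSeries_onMultiples_cyclicIndicator_mul_le hr hs).trans hzeta
    _ = _ := by ring

theorem logSummatory_onMultiples_cyclicIndicator_isLittleO {r : ℕ} (hr : r.Prime) :
    logSummatory (onMultiples r (cyclicIndicator 0)) =o[atTop]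
      logSummatory (cyclicIndicator 0) := by
  obtain ⟨κ, hκ, hbound⟩ := logSummatory_onMultiples_cyclicIndicator_isBigO hr
  obtain ⟨α, hα, hα1, hκα⟩ : ∃ α, 0 ≤ α ∧ α < 1 ∧ 1 - κ < α :=
    ⟨max 0 (1 - κ / 2), le_max_left _ _, max_lt one_pos (by linarith),
      lt_max_of_lt_right (by linarith)⟩
  have hpow : (fun x ↦ log x ^ (1 - κ)) =o[atTop] fun x ↦ log x ^ α :=
    (rpow_isLittleO_rpow_atTop hκα).comp_tendsto tendsto_log_atTop
  exact (hbound.trans_isLittleO hpow).trans_isBigO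
    (rpow_log_isBigO_logSummatory_cyclicIndicator hα hα1)

/-! ### Power sums of cyclic numbers -/

theorem summatory_logDefect_cyclicIndicator_isLittleO :
    summatory (logDefect (cyclicIndicator 0)) =o[atTop]
      fun x ↦ x * logSummatory (cyclicIndicator 0) x := by
  have hcyclic := isDivisorAntitone_cyclicIndicator 0
  refine IsLittleO.of_bound fun ε hε ↦ ?_
  obtain ⟨R₀, hR₀⟩ := exists_eventually_summatory_logDefect_cyclicIndicator_le (half_pos hε)
  have hmultiples : (fun x ↦ ∑ r ∈ Ioc 0 R₀ with r.Prime,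
      logSummatory (onMultiples r (cyclicIndicator 0)) x) =o[atTop]
        logSummatory (cyclicIndicator 0) :=
    IsLittleO.fun_sum fun r hr ↦
      logSummatory_onMultiples_cyclicIndicator_isLittleO (Finset.mem_filter.mp hr).2
  filter_upwards [hR₀ 0, hmultiples.bound (by positivity : 0 < ε / 36), eventually_ge_atTop 0]
    with x hdefect hsum hx
  have hD : 0 ≤ logSummatory (cyclicIndicator 0) x := logSummatory_nonneg hcyclic.nonneg x
  rw [norm_of_nonneg hD] at hsum
  rw [norm_of_nonneg (summatory_nonneg hcyclic.logDefect_nonneg x), norm_of_nonneg (by positivity)]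
  calc _ ≤ ε / 2 * (x * logSummatory (cyclicIndicator 0) x) +
        18 * x * (ε / 36 * logSummatory (cyclicIndicator 0) x) := by
        refine hdefect.trans ?_
        gcongr
        exact (le_norm_self _).trans hsum
    _ = _ := by ring

lemma cyclicCount_eq_summatory (x : ℝ) : (cyclicCount x : ℝ) = summatory (cyclicIndicator 0) x := by
  rw [← sum_range_floor_add_one (by simp), cyclicCount, Finset.card_filter]
  simp [cyclicIndicator_zero_apply]

lemma cyclicPowSum_eq_summatory (k : ℕ) (x : ℝ) :
    cyclicPowSum k x = summatory (fun n ↦ cyclicIndicator 0 n * (n : ℝ) ^ k) x := by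
  rw [← sum_range_floor_add_one (by simp), cyclicPowSum, Finset.sum_filter]
  simp [cyclicIndicator_zero_apply]

theorem cyclicPowSum_isEquivalent_count (k : ℕ) (hk : 0 < k) :
    (fun x : ℝ => cyclicPowSum k x) ~[atTop]
      (fun x : ℝ => (cyclicCount x : ℝ) * x ^ k / (k + 1)) := by
  simp only [cyclicPowSum_eq_summatory, cyclicCount_eq_summatory]
  have hcyclic := isDivisorAntitone_cyclicIndicator 0
  have hpos : ∀ᶠ x in atTop, 0 < summatory (cyclicIndicator 0) x :=
    (eventually_ge_atTop 1).mono fun x hx ↦ one_pos.trans_le (hcyclic.one_le_summatory hx)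
  exact summatory_mul_pow_isEquivalent (by simp) hcyclic.nonneg hpos
    (fun u hu hu1 ↦ hcyclic.tendsto_summatory_ratio (tendsto_logSummatory_cyclicIndicator 0)
      summatory_logDefect_cyclicIndicator_isLittleO hu hu1) k
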